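/- arXiv:2510.25576 — 2 statements merged into one kernel-verified Lean document; each statement's English description precedes it below -/
import Mathlib

section
/- Fix x₀ > 0 and L > 3x₀ and let H, λ be the associated critical data. There exists a constant C > 0 (depending only on x₀ and L) such that for every φ ∈ C²([0,2L], ℝ) with φ(0) = φ(2L) = 0 and φ̇(0) = φ̇(2L) = 0 one has ∫₀^{2L} ((2−λ)H(s)φ(s)² − 2φ̇(s)²/H(s) + 2φ̈(s)²/H(s)³) ds ≥ C·∫₀^{2L} (φ(s)² + φ̇(s)² + φ̈(s)²) ds. -/
open Real Set

noncomputable def sig (x0 L : ℝ) : ℝ := π * Real.sqrt (x0 / (L + x0))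

noncomputable def kap (x0 L : ℝ) : ℝ := L / Real.sin (sig x0 L)

noncomputable def Hc (x0 L s : ℝ) : ℝ :=
  π / (sig x0 L * Real.sqrt (kap x0 L ^ 2 - (s - L) ^ 2))

/-!
In the angle variable `t` with `dt = H ds`, that is `s = L + κ sin (ω t)` with `ω = σ / π`, the
function `f t = φ (s t)` satisfies `φ̇ = H f'` and `φ̈ = H² (f'' + g f')`, where `g = ω tan (ω t)`
solves the Riccati equation `g' = g² + ω²`. Since `2 - λ = 2 ω²`, half of the second variation is
`∫ ω² f² - f'² + (f'' + g f')²`. The Riccati equation turns `∫ (f'' + g f')²` into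
`∫ f''² - ω² f'²`, and `∫ f f'' = -∫ f'²` then gives

  `ω² ∫ (f + f'')² + (1 - ω²) ∫ (f''² - f'²)`.

As `t` runs over an interval of length at most `2 π`, Wirtinger's inequality for `f'` makes the
second term nonnegative. The first term is coercive because a function with vanishing initial
data is controlled by its image under the oscillator `f ↦ f + f''`.
-/

open MeasureTheory
open scoped Interval

section Wirtinger

variable {a b : ℝ}

lemma norm_fourierCoeffOn_le_of_hasDerivAt {u u' : ℝ → ℂ} (hab : a < b)
    (hu : ∀ t ∈ [[a, b]], HasDerivAt u (u' t) t) (hu' : IntervalIntegrable u' volume a b)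
    (hper : u a = u b) {n : ℤ} (hn : n ≠ 0) :
    ‖fourierCoeffOn hab u n‖ ≤ (b - a) / (2 * π) * ‖fourierCoeffOn hab u' n‖ := by
  have hlen : 0 < b - a := sub_pos.2 hab
  have hn' : (1 : ℝ) ≤ |(n : ℝ)| := mod_cast Int.one_le_abs hn
  have hfactor : ‖1 / (-2 * (π : ℂ) * Complex.I * n)‖ ≤ 1 / (2 * π) := by
    simp only [norm_mul, norm_div, norm_neg, Complex.norm_I, Complex.norm_real, norm_one,
      Complex.norm_intCast, Complex.norm_ofNat, Real.norm_eq_abs, abs_of_pos pi_pos, mul_one]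
    exact one_div_le_one_div_of_le two_pi_pos (le_mul_of_one_le_right two_pi_pos.le hn')
  calc ‖fourierCoeffOn hab u n‖
      = ‖1 / (-2 * (π : ℂ) * Complex.I * n)‖ * ((b - a) * ‖fourierCoeffOn hab u' n‖) := by
        rw [fourierCoeffOn_of_hasDerivAt hab hn hu hu', hper, sub_self, mul_zero, zero_sub,
          norm_mul, norm_neg, norm_mul, ← Complex.ofReal_sub, Complex.norm_of_nonneg hlen.le]
    _ ≤ 1 / (2 * π) * ((b - a) * ‖fourierCoeffOn hab u' n‖) := by gcongr
    _ = (b - a) / (2 * π) * ‖fourierCoeffOn hab u' n‖ := by ring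

lemma hasSum_sq_fourierCoeffOn_of_continuousOn {u : ℝ → ℂ} (hab : a < b)
    (hu : ContinuousOn u [[a, b]]) :
    HasSum (fun n => ‖fourierCoeffOn hab u n‖ ^ 2) ((b - a)⁻¹ * ∫ t in a..b, ‖u t‖ ^ 2) := by
  rw [uIcc_of_le hab.le] at hu
  refine hasSum_sq_fourierCoeffOn hab ((memLp_two_iff_integrable_sq_norm ?_).2 ?_)
  · exact (hu.mono Ioc_subset_Icc_self).aestronglyMeasurable measurableSet_Ioc
  · exact (hu.norm.pow 2).integrableOn_Icc.mono_set Ioc_subset_Icc_self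

theorem integral_norm_sq_le_integral_norm_deriv_sq {u u' : ℝ → ℂ} (hab : a < b)
    (hu : ∀ t ∈ [[a, b]], HasDerivAt u (u' t) t) (hu' : ContinuousOn u' [[a, b]])
    (hper : u a = u b) (hmean : ∫ t in a..b, u t = 0) :
    ∫ t in a..b, ‖u t‖ ^ 2 ≤ ((b - a) / (2 * π)) ^ 2 * ∫ t in a..b, ‖u' t‖ ^ 2 := by
  have hcoeff (n : ℤ) : ‖fourierCoeffOn hab u n‖ ^ 2 ≤
      ((b - a) / (2 * π)) ^ 2 * ‖fourierCoeffOn hab u' n‖ ^ 2 := by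
    rcases eq_or_ne n 0 with rfl | hn
    · have hzero : fourierCoeffOn hab u 0 = 0 := by simp [fourierCoeffOn_eq_integral, hmean]
      rw [hzero, norm_zero, zero_pow two_ne_zero]
      positivity
    · rw [← mul_pow]
      gcongr
      exact norm_fourierCoeffOn_le_of_hasDerivAt hab hu hu'.intervalIntegrable hper hn
  have hparseval := hasSum_le hcoeff
    (hasSum_sq_fourierCoeffOn_of_continuousOn hab (HasDerivAt.continuousOn hu))
    ((hasSum_sq_fourierCoeffOn_of_continuousOn hab hu').mul_left _)
  rw [mul_left_comm] at hparseval
  exact le_of_mul_le_mul_left hparseval (inv_pos.2 (sub_pos.2 hab))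

theorem integral_sq_le_integral_deriv_sq {u u' : ℝ → ℝ} (hab : a < b)
    (hu : ∀ t ∈ [[a, b]], HasDerivAt u (u' t) t) (hu' : ContinuousOn u' [[a, b]])
    (hper : u a = u b) (hmean : ∫ t in a..b, u t = 0) :
    ∫ t in a..b, u t ^ 2 ≤ ((b - a) / (2 * π)) ^ 2 * ∫ t in a..b, u' t ^ 2 := by
  simpa using integral_norm_sq_le_integral_norm_deriv_sq (u := fun t => (u t : ℂ))
    (u' := fun t => (u' t : ℂ)) hab (fun t ht => (hu t ht).ofReal_comp)
    (Complex.continuous_ofReal.comp_continuousOn hu') (by rw [hper])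
    (by rw [intervalIntegral.integral_ofReal, hmean, Complex.ofReal_zero])

end Wirtinger

section Oscillator

variable {f f' f'' : ℝ → ℝ} {a b : ℝ}

lemma sq_add_sq_le_sub_exp_mul_energy_deriv {t : ℝ} (ht : t ∈ Icc a b) (x x' x'' : ℝ) :
    x ^ 2 + x' ^ 2 ≤ 4 * exp (b - a) * (x + x'') ^ 2 -
      2 * exp b * (exp (-t) * (2 * x' * (x + x'') - (x ^ 2 + x' ^ 2))) := by
  have hlower : 1 ≤ exp b * exp (-t) := by
    rw [← exp_add]
    exact one_le_exp (by linarith [ht.2])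
  have hupper : exp b * exp (-t) ≤ exp (b - a) := by
    rw [← exp_add]
    exact exp_le_exp.2 (by linarith [ht.1])
  have hyoung : x ^ 2 + x' ^ 2 ≤
      4 * (x + x'') ^ 2 - 2 * (2 * x' * (x + x'') - (x ^ 2 + x' ^ 2)) := by
    nlinarith [sq_nonneg (x' - 2 * (x + x'')), sq_nonneg x]
  have hscaled := mul_le_mul_of_nonneg_left hyoung (zero_le_one.trans hlower)
  have hleft := mul_le_mul_of_nonneg_right hlower (by positivity : 0 ≤ x ^ 2 + x' ^ 2)
  have hright := mul_le_mul_of_nonneg_right hupper (sq_nonneg (x + x''))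
  linarith

lemma integral_exp_neg_mul_energy_deriv_nonneg
    (hf : ∀ t ∈ [[a, b]], HasDerivAt f (f' t) t) (hf' : ∀ t ∈ [[a, b]], HasDerivAt f' (f'' t) t)
    (hf'' : ContinuousOn f'' [[a, b]]) (hfa : f a = 0) (hfa' : f' a = 0) :
    0 ≤ ∫ t in a..b, exp (-t) * (2 * f' t * (f t + f'' t) - (f t ^ 2 + f' t ^ 2)) := by
  have hfc : ContinuousOn f [[a, b]] := HasDerivAt.continuousOn hf
  have hfc' : ContinuousOn f' [[a, b]] := HasDerivAt.continuousOn hf'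
  rw [intervalIntegral.integral_eq_sub_of_hasDerivAt
    (f := fun t => exp (-t) * (f t ^ 2 + f' t ^ 2))]
  · simp only [hfa, hfa', zero_pow two_ne_zero, add_zero, mul_zero, sub_zero]
    positivity
  · intro t ht
    refine ((hasDerivAt_neg t).exp.mul
      (((hf t ht).pow 2).add ((hf' t ht).pow 2))).congr_deriv ?_
    simp only [Pi.add_apply, Pi.pow_apply]
    ring
  · exact ContinuousOn.intervalIntegrable (by fun_prop)

lemma integral_sq_add_deriv_sq_le (hab : a ≤ b)
    (hf : ∀ t ∈ [[a, b]], HasDerivAt f (f' t) t) (hf' : ∀ t ∈ [[a, b]], HasDerivAt f' (f'' t) t)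
    (hf'' : ContinuousOn f'' [[a, b]]) (hfa : f a = 0) (hfa' : f' a = 0) :
    ∫ t in a..b, (f t ^ 2 + f' t ^ 2) ≤ 4 * exp (b - a) * ∫ t in a..b, (f t + f'' t) ^ 2 := by
  have hfc : ContinuousOn f [[a, b]] := HasDerivAt.continuousOn hf
  have hfc' : ContinuousOn f' [[a, b]] := HasDerivAt.continuousOn hf'
  have hpointwise := intervalIntegral.integral_mono_on (μ := volume) hab
    (ContinuousOn.intervalIntegrable (by fun_prop))
    (ContinuousOn.intervalIntegrable (by fun_prop))
    fun t ht => sq_add_sq_le_sub_exp_mul_energy_deriv ht (f t) (f' t) (f'' t)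
  rw [intervalIntegral.integral_sub (ContinuousOn.intervalIntegrable (by fun_prop))
    (ContinuousOn.intervalIntegrable (by fun_prop)), intervalIntegral.integral_const_mul,
    intervalIntegral.integral_const_mul] at hpointwise
  -- Grönwall: the subtracted term is the derivative of `e⁻ᵗ (f² + f'²)`.
  have henergy := integral_exp_neg_mul_energy_deriv_nonneg hf hf' hf'' hfa hfa'
  linarith [mul_nonneg (mul_pos two_pos (exp_pos b)).le henergy]

theorem integral_sq_add_deriv_sq_add_deriv2_sq_le (hab : a ≤ b)
    (hf : ∀ t ∈ [[a, b]], HasDerivAt f (f' t) t) (hf' : ∀ t ∈ [[a, b]], HasDerivAt f' (f'' t) t)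
    (hf'' : ContinuousOn f'' [[a, b]]) (hfa : f a = 0) (hfa' : f' a = 0) :
    ∫ t in a..b, (f t ^ 2 + f' t ^ 2 + f'' t ^ 2) ≤
      (12 * exp (b - a) + 2) * ∫ t in a..b, (f t + f'' t) ^ 2 := by
  have hfc : ContinuousOn f [[a, b]] := HasDerivAt.continuousOn hf
  have hfc' : ContinuousOn f' [[a, b]] := HasDerivAt.continuousOn hf'
  calc ∫ t in a..b, (f t ^ 2 + f' t ^ 2 + f'' t ^ 2)
      ≤ ∫ t in a..b, (3 * (f t ^ 2 + f' t ^ 2) + 2 * (f t + f'' t) ^ 2) := by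
        refine intervalIntegral.integral_mono_on hab (ContinuousOn.intervalIntegrable (by fun_prop))
          (ContinuousOn.intervalIntegrable (by fun_prop)) fun t _ => ?_
        nlinarith [sq_nonneg (2 * f t + f'' t), sq_nonneg (f' t)]
    _ = 3 * (∫ t in a..b, (f t ^ 2 + f' t ^ 2)) + 2 * ∫ t in a..b, (f t + f'' t) ^ 2 := by
        rw [intervalIntegral.integral_add (ContinuousOn.intervalIntegrable (by fun_prop))
          (ContinuousOn.intervalIntegrable (by fun_prop)), intervalIntegral.integral_const_mul,
          intervalIntegral.integral_const_mul]
    _ ≤ (12 * exp (b - a) + 2) * ∫ t in a..b, (f t + f'' t) ^ 2 := by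
        linarith [integral_sq_add_deriv_sq_le hab hf hf' hf'' hfa hfa']

end Oscillator

theorem integral_deriv_add_mul_sq_of_riccati {u u' g : ℝ → ℝ} {a b c : ℝ}
    (hu : ∀ t ∈ [[a, b]], HasDerivAt u (u' t) t) (hu' : ContinuousOn u' [[a, b]])
    (hg : ∀ t ∈ [[a, b]], HasDerivAt g (g t ^ 2 + c) t) (hua : u a = 0) (hub : u b = 0) :
    ∫ t in a..b, (u' t + g t * u t) ^ 2 = ∫ t in a..b, (u' t ^ 2 - c * u t ^ 2) := by
  have huc : ContinuousOn u [[a, b]] := HasDerivAt.continuousOn hu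
  have hgc : ContinuousOn g [[a, b]] := HasDerivAt.continuousOn hg
  rw [← sub_eq_zero, ← intervalIntegral.integral_sub (ContinuousOn.intervalIntegrable (by fun_prop))
    (ContinuousOn.intervalIntegrable (by fun_prop)),
    intervalIntegral.integral_eq_sub_of_hasDerivAt (f := fun t => g t * u t ^ 2)]
  · simp [hua, hub]
  · intro t ht
    refine ((hg t ht).mul ((hu t ht).pow 2)).congr_deriv ?_
    simp only [Pi.pow_apply]
    ring
  · exact ContinuousOn.intervalIntegrable (by fun_prop)

/-- `f` is a `C²` function on the interval between `a` and `b`, with first and second derivatives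
`f'` and `f''`, satisfying the clamped boundary conditions `f = f' = 0` at both endpoints. The
derivatives are carried as data so that they can be given by explicit formulas, and they are
two-sided also at the endpoints. -/
structure IsClamped (f f' f'' : ℝ → ℝ) (a b : ℝ) : Prop where
  hasDerivAt : ∀ t ∈ [[a, b]], HasDerivAt f (f' t) t
  hasDerivAt_deriv : ∀ t ∈ [[a, b]], HasDerivAt f' (f'' t) t
  continuousOn_deriv2 : ContinuousOn f'' [[a, b]]
  eq_zero_left : f a = 0
  eq_zero_right : f b = 0
  deriv_eq_zero_left : f' a = 0
  deriv_eq_zero_right : f' b = 0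

namespace IsClamped

variable {f f' f'' g : ℝ → ℝ} {a b ω : ℝ}

lemma of_contDiff (hf : ContDiff ℝ 2 f) (hfa : f a = 0) (hfb : f b = 0) (hfa' : deriv f a = 0)
    (hfb' : deriv f b = 0) : IsClamped f (deriv f) (deriv (deriv f)) a b := by
  have hf' : ContDiff ℝ 1 (deriv f) := ContDiff.deriv' (hf.of_le (by norm_num))
  exact
    { hasDerivAt := fun t _ => (hf.differentiable two_ne_zero t).hasDerivAt
      hasDerivAt_deriv := fun t _ => (hf'.differentiable one_ne_zero t).hasDerivAt
      continuousOn_deriv2 := hf'.continuous_deriv_one.continuousOn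
      eq_zero_left := hfa
      eq_zero_right := hfb
      deriv_eq_zero_left := hfa'
      deriv_eq_zero_right := hfb' }

lemma continuousOn (hf : IsClamped f f' f'' a b) : ContinuousOn f [[a, b]] :=
  HasDerivAt.continuousOn hf.hasDerivAt

lemma continuousOn_deriv (hf : IsClamped f f' f'' a b) : ContinuousOn f' [[a, b]] :=
  HasDerivAt.continuousOn hf.hasDerivAt_deriv

lemma comp {φ φ' φ'' y p g : ℝ → ℝ} (hφ : IsClamped φ φ' φ'' (y a) (y b))
    (hy : ∀ t ∈ [[a, b]], HasDerivAt y (p t) t)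
    (hp : ∀ t ∈ [[a, b]], HasDerivAt p (-(g t * p t)) t) (hg : ContinuousOn g [[a, b]])
    (hmaps : MapsTo y [[a, b]] [[y a, y b]]) :
    IsClamped (fun t => φ (y t)) (fun t => φ' (y t) * p t)
      (fun t => φ'' (y t) * p t ^ 2 - g t * (φ' (y t) * p t)) a b where
  hasDerivAt t ht := (hφ.hasDerivAt _ (hmaps ht)).comp t (hy t ht)
  hasDerivAt_deriv t ht := by
    refine (((hφ.hasDerivAt_deriv _ (hmaps ht)).comp t (hy t ht)).mul (hp t ht)).congr_deriv ?_
    simp only [Function.comp_apply]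
    ring
  continuousOn_deriv2 := by
    have hyc : ContinuousOn y [[a, b]] := HasDerivAt.continuousOn hy
    have hpc : ContinuousOn p [[a, b]] := HasDerivAt.continuousOn hp
    have hφc' := hφ.continuousOn_deriv.comp hyc hmaps
    have hφc'' := hφ.continuousOn_deriv2.comp hyc hmaps
    exact (hφc''.mul (hpc.pow 2)).sub (hg.mul (hφc'.mul hpc))
  eq_zero_left := hφ.eq_zero_left
  eq_zero_right := hφ.eq_zero_right
  deriv_eq_zero_left := by simp [hφ.deriv_eq_zero_left]
  deriv_eq_zero_right := by simp [hφ.deriv_eq_zero_right]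

lemma integral_deriv_eq_zero (hf : IsClamped f f' f'' a b) : ∫ t in a..b, f' t = 0 := by
  rw [intervalIntegral.integral_eq_sub_of_hasDerivAt hf.hasDerivAt
    hf.continuousOn_deriv.intervalIntegrable, hf.eq_zero_left, hf.eq_zero_right, sub_zero]

lemma integral_deriv_sq_add_mul_deriv2_eq_zero (hf : IsClamped f f' f'' a b) :
    ∫ t in a..b, (f' t * f' t + f t * f'' t) = 0 := by
  have hcont := hf.continuousOn
  have hcont' := hf.continuousOn_deriv
  have hcont'' := hf.continuousOn_deriv2
  rw [intervalIntegral.integral_eq_sub_of_hasDerivAt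
    (fun t ht => (hf.hasDerivAt t ht).mul (hf.hasDerivAt_deriv t ht))
    (ContinuousOn.intervalIntegrable (by fun_prop))]
  simp [hf.eq_zero_left, hf.eq_zero_right]

lemma integral_deriv_sq_le_integral_deriv2_sq (hf : IsClamped f f' f'' a b) (hab : a < b)
    (hlen : b - a ≤ 2 * π) : ∫ t in a..b, f' t ^ 2 ≤ ∫ t in a..b, f'' t ^ 2 := by
  have hratio : (b - a) / (2 * π) ≤ 1 := (div_le_one two_pi_pos).2 hlen
  have hratio_nonneg : 0 ≤ (b - a) / (2 * π) := div_nonneg (sub_pos.2 hab).le two_pi_pos.le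
  calc ∫ t in a..b, f' t ^ 2 ≤ ((b - a) / (2 * π)) ^ 2 * ∫ t in a..b, f'' t ^ 2 :=
        integral_sq_le_integral_deriv_sq hab hf.hasDerivAt_deriv hf.continuousOn_deriv2
          (hf.deriv_eq_zero_left.trans hf.deriv_eq_zero_right.symm) hf.integral_deriv_eq_zero
    _ ≤ ∫ t in a..b, f'' t ^ 2 :=
        mul_le_of_le_one_left (intervalIntegral.integral_nonneg hab.le fun t _ => sq_nonneg _)
          (pow_le_one₀ hratio_nonneg hratio)

lemma mul_integral_add_deriv2_sq_le (hf : IsClamped f f' f'' a b) (hab : a < b)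
    (hlen : b - a ≤ 2 * π) (hω : ω ^ 2 ≤ 1) :
    ω ^ 2 * ∫ t in a..b, (f t + f'' t) ^ 2 ≤
      ∫ t in a..b, (ω ^ 2 * f t ^ 2 - f' t ^ 2 + (f'' t ^ 2 - ω ^ 2 * f' t ^ 2)) := by
  have hcont := hf.continuousOn
  have hcont' := hf.continuousOn_deriv
  have hcont'' := hf.continuousOn_deriv2
  have hsplit : ∫ t in a..b, (ω ^ 2 * f t ^ 2 - f' t ^ 2 + (f'' t ^ 2 - ω ^ 2 * f' t ^ 2)) =
      ω ^ 2 * (∫ t in a..b, (f t + f'' t) ^ 2) +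
        (1 - ω ^ 2) * ((∫ t in a..b, f'' t ^ 2) - ∫ t in a..b, f' t ^ 2) -
        2 * ω ^ 2 * ∫ t in a..b, (f' t * f' t + f t * f'' t) := by
    rw [← intervalIntegral.integral_sub, ← intervalIntegral.integral_const_mul,
      ← intervalIntegral.integral_const_mul, ← intervalIntegral.integral_const_mul,
      ← intervalIntegral.integral_add, ← intervalIntegral.integral_sub]
    · congr 1 with t
      ring
    all_goals exact ContinuousOn.intervalIntegrable (by fun_prop)
  have hwirtinger := hf.integral_deriv_sq_le_integral_deriv2_sq hab hlen
  rw [hsplit, hf.integral_deriv_sq_add_mul_deriv2_eq_zero]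
  linarith [mul_nonneg (sub_nonneg.2 hω) (sub_nonneg.2 hwirtinger)]

lemma integral_riccati_form_eq (hf : IsClamped f f' f'' a b)
    (hg : ∀ t ∈ [[a, b]], HasDerivAt g (g t ^ 2 + ω ^ 2) t) :
    ∫ t in a..b, (ω ^ 2 * f t ^ 2 - f' t ^ 2 + (f'' t + g t * f' t) ^ 2) =
      ∫ t in a..b, (ω ^ 2 * f t ^ 2 - f' t ^ 2 + (f'' t ^ 2 - ω ^ 2 * f' t ^ 2)) := by
  have hcont := hf.continuousOn
  have hcont' := hf.continuousOn_deriv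
  have hcont'' := hf.continuousOn_deriv2
  have hgc : ContinuousOn g [[a, b]] := HasDerivAt.continuousOn hg
  rw [intervalIntegral.integral_add, intervalIntegral.integral_add,
    integral_deriv_add_mul_sq_of_riccati hf.hasDerivAt_deriv hcont'' hg hf.deriv_eq_zero_left
      hf.deriv_eq_zero_right]
  all_goals exact ContinuousOn.intervalIntegrable (by fun_prop)

lemma integral_sq_add_deriv_add_mul_sq_le (hf : IsClamped f f' f'' a b) (hab : a ≤ b)
    (hg : ContinuousOn g [[a, b]]) {G : ℝ} (hG : ∀ t ∈ [[a, b]], ‖g t‖ ≤ G) :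
    ∫ t in a..b, (f t ^ 2 + f' t ^ 2 + (f'' t + g t * f' t) ^ 2) ≤
      (2 + 2 * G ^ 2) * ∫ t in a..b, (f t ^ 2 + f' t ^ 2 + f'' t ^ 2) := by
  have hcont := hf.continuousOn
  have hcont' := hf.continuousOn_deriv
  have hcont'' := hf.continuousOn_deriv2
  rw [← intervalIntegral.integral_const_mul]
  refine intervalIntegral.integral_mono_on hab (ContinuousOn.intervalIntegrable (by fun_prop))
    (ContinuousOn.intervalIntegrable (by fun_prop)) fun t ht => ?_
  have hg_sq : g t ^ 2 ≤ G ^ 2 := sq_le_sq' (abs_le.1 (hG t (Icc_subset_uIcc ht))).1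
    (abs_le.1 (hG t (Icc_subset_uIcc ht))).2
  nlinarith [sq_nonneg (f'' t - g t * f' t), mul_le_mul_of_nonneg_right hg_sq (sq_nonneg (f' t)),
    sq_nonneg (f t), sq_nonneg (f' t), mul_nonneg (sq_nonneg G) (sq_nonneg (f t)),
    mul_nonneg (sq_nonneg G) (sq_nonneg (f'' t))]

end IsClamped

theorem exists_coercive_of_riccati {g : ℝ → ℝ} {a b ω : ℝ} (hab : a < b) (hlen : b - a ≤ 2 * π)
    (hω : 0 < ω) (hω1 : ω ≤ 1) (hg : ∀ t ∈ [[a, b]], HasDerivAt g (g t ^ 2 + ω ^ 2) t) :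
    ∃ K > 0, ∀ f f' f'' : ℝ → ℝ, IsClamped f f' f'' a b →
      K * ∫ t in a..b, (f t ^ 2 + f' t ^ 2 + (f'' t + g t * f' t) ^ 2) ≤
        ∫ t in a..b, (ω ^ 2 * f t ^ 2 - f' t ^ 2 + (f'' t + g t * f' t) ^ 2) := by
  have hgc : ContinuousOn g [[a, b]] := HasDerivAt.continuousOn hg
  obtain ⟨G, hG⟩ := isCompact_uIcc.exists_bound_of_continuousOn hgc
  let M := (2 + 2 * G ^ 2) * (12 * exp (b - a) + 2)
  have hM : 0 < M := by positivity
  refine ⟨ω ^ 2 / M, by positivity, fun f f' f'' hf => ?_⟩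
  have hnorm : ∫ t in a..b, (f t ^ 2 + f' t ^ 2 + (f'' t + g t * f' t) ^ 2) ≤
      M * ∫ t in a..b, (f t + f'' t) ^ 2 := by
    rw [mul_assoc]
    refine (hf.integral_sq_add_deriv_add_mul_sq_le hab.le hgc hG).trans ?_
    gcongr
    exact integral_sq_add_deriv_sq_add_deriv2_sq_le hab.le hf.hasDerivAt hf.hasDerivAt_deriv
      hf.continuousOn_deriv2 hf.eq_zero_left hf.deriv_eq_zero_left
  calc ω ^ 2 / M * ∫ t in a..b, (f t ^ 2 + f' t ^ 2 + (f'' t + g t * f' t) ^ 2)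
      ≤ ω ^ 2 / M * (M * ∫ t in a..b, (f t + f'' t) ^ 2) := by gcongr
    _ = ω ^ 2 * ∫ t in a..b, (f t + f'' t) ^ 2 := by field_simp
    _ ≤ ∫ t in a..b, (ω ^ 2 * f t ^ 2 - f' t ^ 2 + (f'' t ^ 2 - ω ^ 2 * f' t ^ 2)) :=
        hf.mul_integral_add_deriv2_sq_le hab hlen (pow_le_one₀ hω.le hω1)
    _ = ∫ t in a..b, (ω ^ 2 * f t ^ 2 - f' t ^ 2 + (f'' t + g t * f' t) ^ 2) :=
        (hf.integral_riccati_form_eq hg).symm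

lemma exists_weight_bound {p : ℝ → ℝ} {S : Set ℝ} (hS : IsCompact S)
    (hp : ContinuousOn p S) (hpos : ∀ t ∈ S, 0 < p t) :
    ∃ B > 0, ∀ t ∈ S, ∀ x y z : ℝ,
      (x ^ 2 + y ^ 2 + z ^ 2) * p t ≤ B * (x ^ 2 + (y * p t) ^ 2 + (z * p t ^ 2) ^ 2) := by
  have hpne : ∀ t ∈ S, p t ≠ 0 := fun t ht => (hpos t ht).ne'
  obtain ⟨B, hB⟩ := hS.exists_bound_of_continuousOn
    ((hp.add (hp.inv₀ hpne)).add ((hp.inv₀ hpne).pow 3))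
  refine ⟨max B 1, by positivity, fun t ht x y z => ?_⟩
  have hpt := hpos t ht
  have hsum : p t + (p t)⁻¹ + (p t)⁻¹ ^ 3 ≤ max B 1 :=
    (le_abs_self _).trans ((hB t ht).trans (le_max_left _ _))
  have hinv : 0 < (p t)⁻¹ := inv_pos.2 hpt
  have hinv3 : 0 < (p t)⁻¹ ^ 3 := pow_pos hinv 3
  calc (x ^ 2 + y ^ 2 + z ^ 2) * p t
      = p t * x ^ 2 + (p t)⁻¹ * (y * p t) ^ 2 + (p t)⁻¹ ^ 3 * (z * p t ^ 2) ^ 2 := by field_simp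
    _ ≤ max B 1 * x ^ 2 + max B 1 * (y * p t) ^ 2 + max B 1 * (z * p t ^ 2) ^ 2 := by
        gcongr <;> linarith
    _ = max B 1 * (x ^ 2 + (y * p t) ^ 2 + (z * p t ^ 2) ^ 2) := by ring

section Reparametrization

variable {y p g H : ℝ → ℝ} {a b ω : ℝ}

lemma monotoneOn_of_hasDerivAt_nonneg (hy : ∀ t ∈ [[a, b]], HasDerivAt y (p t) t)
    (hp : ∀ t ∈ [[a, b]], 0 ≤ p t) : MonotoneOn y [[a, b]] :=
  monotoneOn_of_hasDerivWithinAt_nonneg (convex_uIcc a b) (HasDerivAt.continuousOn hy)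
    (fun t ht => (hy t (interior_subset ht)).hasDerivWithinAt)
    fun t ht => hp t (interior_subset ht)

lemma integral_eq_integral_comp_mul_deriv (hy : ∀ t ∈ [[a, b]], HasDerivAt y (p t) t)
    (hp : ∀ t ∈ [[a, b]], 0 ≤ p t) (F : ℝ → ℝ) :
    ∫ s in y a..y b, F s = ∫ t in a..b, F (y t) * p t :=
  (intervalIntegral.integral_comp_mul_deriv_of_deriv_nonneg (HasDerivAt.continuousOn hy)
    (fun t ht => hy t (Ioo_subset_Icc_self ht)) fun t ht => hp t (Ioo_subset_Icc_self ht)).symm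

lemma integral_form_eq_integral_comp (hy : ∀ t ∈ [[a, b]], HasDerivAt y (p t) t)
    (hp : ∀ t ∈ [[a, b]], 0 < p t) (hH : ∀ t ∈ [[a, b]], H (y t) = (p t)⁻¹)
    (φ φ' φ'' : ℝ → ℝ) :
    ∫ s in y a..y b, (ω ^ 2 * H s * φ s ^ 2 - φ' s ^ 2 / H s + φ'' s ^ 2 / H s ^ 3) =
      ∫ t in a..b,
        (ω ^ 2 * φ (y t) ^ 2 - (φ' (y t) * p t) ^ 2 + (φ'' (y t) * p t ^ 2) ^ 2) := by
  rw [integral_eq_integral_comp_mul_deriv hy fun t ht => (hp t ht).le]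
  refine intervalIntegral.integral_congr fun t ht => ?_
  have hpt := hp t ht
  simp only [hH t ht]
  field_simp

lemma exists_integral_sq_le_integral_comp (hab : a ≤ b)
    (hy : ∀ t ∈ [[a, b]], HasDerivAt y (p t) t) (hpc : ContinuousOn p [[a, b]])
    (hp : ∀ t ∈ [[a, b]], 0 < p t) :
    ∃ B > 0, ∀ φ φ' φ'' : ℝ → ℝ, IsClamped φ φ' φ'' (y a) (y b) →
      ∫ s in y a..y b, (φ s ^ 2 + φ' s ^ 2 + φ'' s ^ 2) ≤
        B * ∫ t in a..b, (φ (y t) ^ 2 + (φ' (y t) * p t) ^ 2 + (φ'' (y t) * p t ^ 2) ^ 2) := by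
  have hp_nonneg : ∀ t ∈ [[a, b]], 0 ≤ p t := fun t ht => (hp t ht).le
  have hyc : ContinuousOn y [[a, b]] := HasDerivAt.continuousOn hy
  have hmaps := (monotoneOn_of_hasDerivAt_nonneg hy hp_nonneg).mapsTo_uIcc
  obtain ⟨B, hB, hbound⟩ := exists_weight_bound isCompact_uIcc hpc hp
  refine ⟨B, hB, fun φ φ' φ'' hφ => ?_⟩
  have hφc : ContinuousOn (fun t => φ (y t)) [[a, b]] := hφ.continuousOn.comp hyc hmaps
  have hφc' : ContinuousOn (fun t => φ' (y t)) [[a, b]] := hφ.continuousOn_deriv.comp hyc hmaps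
  have hφc'' : ContinuousOn (fun t => φ'' (y t)) [[a, b]] := hφ.continuousOn_deriv2.comp hyc hmaps
  rw [integral_eq_integral_comp_mul_deriv hy hp_nonneg, ← intervalIntegral.integral_const_mul]
  refine intervalIntegral.integral_mono_on hab
    (((hφc.pow 2).add (hφc'.pow 2)).add (hφc''.pow 2) |>.mul hpc).intervalIntegrable
    (ContinuousOn.intervalIntegrable ?_) fun t ht => hbound t (Icc_subset_uIcc ht) _ _ _
  exact continuousOn_const.mul
    (((hφc.pow 2).add ((hφc'.mul hpc).pow 2)).add ((hφc''.mul (hpc.pow 2)).pow 2))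

theorem exists_coercive_of_reparametrization (hab : a < b) (hlen : b - a ≤ 2 * π)
    (hω : 0 < ω) (hω1 : ω ≤ 1) (hy : ∀ t ∈ [[a, b]], HasDerivAt y (p t) t)
    (hp : ∀ t ∈ [[a, b]], HasDerivAt p (-(g t * p t)) t)
    (hg : ∀ t ∈ [[a, b]], HasDerivAt g (g t ^ 2 + ω ^ 2) t)
    (hpos : ∀ t ∈ [[a, b]], 0 < p t) (hH : ∀ t ∈ [[a, b]], H (y t) = (p t)⁻¹) :
    ∃ C > 0, ∀ φ φ' φ'' : ℝ → ℝ, IsClamped φ φ' φ'' (y a) (y b) →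
      C * ∫ s in y a..y b, (φ s ^ 2 + φ' s ^ 2 + φ'' s ^ 2) ≤
        ∫ s in y a..y b, (ω ^ 2 * H s * φ s ^ 2 - φ' s ^ 2 / H s + φ'' s ^ 2 / H s ^ 3) := by
  obtain ⟨K, hK, hcoercive⟩ := exists_coercive_of_riccati hab hlen hω hω1 hg
  obtain ⟨B, hB, hnorm⟩ :=
    exists_integral_sq_le_integral_comp hab.le hy (HasDerivAt.continuousOn hp) hpos
  refine ⟨K / B, by positivity, fun φ φ' φ'' hφ => ?_⟩
  have hmaps := (monotoneOn_of_hasDerivAt_nonneg hy fun t ht => (hpos t ht).le).mapsTo_uIcc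
  have hf := hφ.comp hy hp (HasDerivAt.continuousOn hg) hmaps
  calc K / B * ∫ s in y a..y b, (φ s ^ 2 + φ' s ^ 2 + φ'' s ^ 2)
      ≤ K / B * (B * ∫ t in a..b,
          (φ (y t) ^ 2 + (φ' (y t) * p t) ^ 2 + (φ'' (y t) * p t ^ 2) ^ 2)) := by
        gcongr
        exact hnorm φ φ' φ'' hφ
    _ = K * ∫ t in a..b,
          (φ (y t) ^ 2 + (φ' (y t) * p t) ^ 2 + (φ'' (y t) * p t ^ 2) ^ 2) := by field_simp
    _ ≤ ∫ t in a..b,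
          (ω ^ 2 * φ (y t) ^ 2 - (φ' (y t) * p t) ^ 2 + (φ'' (y t) * p t ^ 2) ^ 2) := by
        simpa only [sub_add_cancel] using hcoercive _ _ _ hf
    _ = _ := (integral_form_eq_integral_comp hy hpos hH φ φ' φ'').symm

end Reparametrization

section CircularWeight

/-- The weight `s ↦ 1 / (ω √(κ² - (s - c)²))`, which is the paper's `H` for `ω = σ / π` and
`c = L`. It takes the junk value `0` when `|κ| ≤ |s - c|`. -/
noncomputable def circularWeight (ω κ c s : ℝ) : ℝ := (ω * √(κ ^ 2 - (s - c) ^ 2))⁻¹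

lemma circularWeight_add_mul_sin (ω c : ℝ) {κ θ : ℝ} (h : 0 ≤ κ * cos θ) :
    circularWeight ω κ c (c + κ * sin θ) = (κ * ω * cos θ)⁻¹ := by
  have hpythagoras : κ ^ 2 - (c + κ * sin θ - c) ^ 2 = (κ * cos θ) ^ 2 := by
    linear_combination -κ ^ 2 * sin_sq_add_cos_sq θ
  rw [circularWeight, hpythagoras, sqrt_sq h, mul_left_comm, mul_assoc]

lemma hasDerivAt_add_mul_sin_mul (c κ ω t : ℝ) :
    HasDerivAt (fun t => c + κ * sin (ω * t)) (κ * ω * cos (ω * t)) t :=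
  ((hasDerivAt_const_mul ω).sin.const_mul κ |>.const_add c).congr_deriv (by ring)

lemma hasDerivAt_mul_cos_mul (κ : ℝ) {ω t : ℝ} (ht : cos (ω * t) ≠ 0) :
    HasDerivAt (fun t => κ * ω * cos (ω * t))
      (-(ω * tan (ω * t) * (κ * ω * cos (ω * t)))) t := by
  refine ((hasDerivAt_const_mul ω).cos.const_mul (κ * ω)).congr_deriv ?_
  rw [tan_eq_sin_div_cos]
  field_simp

lemma hasDerivAt_mul_tan_mul {ω t : ℝ} (ht : cos (ω * t) ≠ 0) :
    HasDerivAt (fun t => ω * tan (ω * t)) ((ω * tan (ω * t)) ^ 2 + ω ^ 2) t := by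
  refine (((hasDerivAt_tan ht).comp t (hasDerivAt_const_mul ω)).const_mul ω).congr_deriv ?_
  rw [tan_eq_sin_div_cos]
  field_simp
  rw [sin_sq_add_cos_sq, mul_one]

theorem exists_coercive_circularWeight {ω κ R : ℝ} (c : ℝ) (hω : 0 < ω) (hω1 : ω ≤ 1)
    (hR : 0 < R) (hRκ : R < κ) (hangle : arcsin (R / κ) ≤ ω * π) :
    ∃ C > 0, ∀ φ φ' φ'' : ℝ → ℝ, IsClamped φ φ' φ'' (c - R) (c + R) →
      C * ∫ s in (c - R)..(c + R), (φ s ^ 2 + φ' s ^ 2 + φ'' s ^ 2) ≤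
        ∫ s in (c - R)..(c + R), (ω ^ 2 * circularWeight ω κ c s * φ s ^ 2 -
          φ' s ^ 2 / circularWeight ω κ c s + φ'' s ^ 2 / circularWeight ω κ c s ^ 3) := by
  have hκ : 0 < κ := hR.trans hRκ
  let T := arcsin (R / κ) / ω
  have hωT : ω * T = arcsin (R / κ) := mul_div_cancel₀ _ hω.ne'
  have hT : 0 < T := div_pos (arcsin_pos.2 (div_pos hR hκ)) hω
  have hTπ : T ≤ π := (div_le_iff₀' hω).2 hangle
  have hsin : κ * sin (ω * T) = R := by
    rw [hωT, sin_arcsin (by linarith [div_pos hR hκ]) ((div_le_one hκ).2 hRκ.le),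
      mul_div_cancel₀ _ hκ.ne']
  have hcos : ∀ t ∈ [[-T, T]], 0 < cos (ω * t) := by
    intro t ht
    rw [uIcc_of_le (by linarith)] at ht
    have hacute : ω * T < π / 2 := hωT.trans_lt (arcsin_lt_pi_div_two.2 ((div_lt_one hκ).2 hRκ))
    exact cos_pos_of_mem_Ioo ⟨by nlinarith [ht.1], by nlinarith [ht.2]⟩
  have hcoercive := exists_coercive_of_reparametrization (a := -T) (b := T) (by linarith)
    (by linarith) hω hω1 (fun t _ => hasDerivAt_add_mul_sin_mul c κ ω t)
    (fun t ht => hasDerivAt_mul_cos_mul κ (hcos t ht).ne')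
    (fun t ht => hasDerivAt_mul_tan_mul (hcos t ht).ne')
    (fun t ht => mul_pos (mul_pos hκ hω) (hcos t ht))
    (fun t ht => circularWeight_add_mul_sin ω c (mul_pos hκ (hcos t ht)).le)
  simpa only [mul_neg, sin_neg, hsin, ← sub_eq_add_neg] using hcoercive

end CircularWeight

lemma arcsin_sin_le_self {x : ℝ} (hx : 0 ≤ x) : arcsin (sin x) ≤ x := by
  rcases le_total x (π / 2) with hle | hge
  · exact (arcsin_sin (by linarith [pi_pos]) hle).le
  · exact (arcsin_le_pi_div_two _).trans hge

lemma sin_lt_one_of_mem_Icc {x : ℝ} (hx : x ∈ Icc 0 π) (hne : x ≠ π / 2) : sin x < 1 := by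
  refine (sin_le_one x).lt_of_ne fun hsin => hne (injOn_cos hx ?_ ?_)
  · exact ⟨pi_div_two_pos.le, half_le_self pi_pos.le⟩
  · rw [cos_pi_div_two, ← sq_eq_zero_iff, cos_sq', hsin, one_pow, sub_self]

lemma Hc_eq_circularWeight (x0 L : ℝ) :
    Hc x0 L = circularWeight √(x0 / (L + x0)) (kap x0 L) L := by
  ext s
  rw [Hc, sig, mul_assoc, div_mul_cancel_left₀ pi_ne_zero, circularWeight]

section CriticalData

variable {x0 L : ℝ}

lemma sqrt_div_add_lt_one (hx0 : 0 < x0) (hL : 0 < L) : √(x0 / (L + x0)) < 1 := by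
  rw [sqrt_lt' one_pos, one_pow, div_lt_one (by positivity)]
  linarith

lemma sig_mem_Ioo (hx0 : 0 < x0) (hL : 0 < L) : sig x0 L ∈ Ioo 0 π :=
  ⟨mul_pos pi_pos (sqrt_pos.2 (by positivity)),
    mul_lt_of_lt_one_right pi_pos (sqrt_div_add_lt_one hx0 hL)⟩

lemma sig_ne_pi_div_two (hx0 : 0 < x0) (hL : 0 < L) (hne : L ≠ 3 * x0) : sig x0 L ≠ π / 2 := by
  intro hsig
  have hsqrt : √(x0 / (L + x0)) = 1 / 2 :=
    mul_left_cancel₀ pi_ne_zero (by rw [← sig, hsig]; ring)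
  rw [sqrt_eq_iff_mul_self_eq_of_pos (by norm_num), eq_div_iff (by positivity)] at hsqrt
  exact hne (by linarith)

lemma lt_kap (hx0 : 0 < x0) (hL : 0 < L) (hne : L ≠ 3 * x0) : L < kap x0 L := by
  have hsig := sig_mem_Ioo hx0 hL
  have hsin : sin (sig x0 L) < 1 :=
    sin_lt_one_of_mem_Icc (Ioo_subset_Icc_self hsig) (sig_ne_pi_div_two hx0 hL hne)
  exact (lt_div_iff₀ (sin_pos_of_mem_Ioo hsig)).2 (mul_lt_of_lt_one_right hL hsin)

lemma arcsin_div_kap_le (hx0 : 0 < x0) (hL : 0 < L) :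
    arcsin (L / kap x0 L) ≤ √(x0 / (L + x0)) * π := by
  rw [kap, div_div_cancel₀ hL.ne', mul_comm, ← sig]
  exact arcsin_sin_le_self (sig_mem_Ioo hx0 hL).1.le

lemma two_sub_eq_two_mul_sqrt_sq (hx0 : 0 < x0) (hL : 0 < L) :
    2 - 2 * L / (L + x0) = 2 * √(x0 / (L + x0)) ^ 2 := by
  rw [sq_sqrt (by positivity)]
  field_simp
  ring

end CriticalData

theorem statement18_general (x0 L : ℝ) (hx0 : 0 < x0) (hL : 0 < L) (hne : L ≠ 3 * x0) :
    ∃ C > (0:ℝ), ∀ φ : ℝ → ℝ, ContDiff ℝ 2 φ →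
      φ 0 = 0 → φ (2 * L) = 0 → deriv φ 0 = 0 → deriv φ (2 * L) = 0 →
      (∫ s in (0:ℝ)..(2 * L),
          ((2 - 2 * L / (L + x0)) * Hc x0 L s * φ s ^ 2 -
            2 * deriv φ s ^ 2 / Hc x0 L s +
            2 * deriv (deriv φ) s ^ 2 / Hc x0 L s ^ 3)) ≥
        C * ∫ s in (0:ℝ)..(2 * L),
          (φ s ^ 2 + deriv φ s ^ 2 + deriv (deriv φ) s ^ 2) := by
  obtain ⟨C, hC, hcoercive⟩ := exists_coercive_circularWeight L (sqrt_pos.2 (by positivity))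
    (sqrt_div_add_lt_one hx0 hL).le hL (lt_kap hx0 hL hne) (arcsin_div_kap_le hx0 hL)
  refine ⟨2 * C, by positivity, fun φ hφ h0 h2L h0' h2L' => ?_⟩
  rw [sub_self, ← two_mul, ← Hc_eq_circularWeight] at hcoercive
  have hscaled := mul_le_mul_of_nonneg_left
    (hcoercive φ _ _ (.of_contDiff hφ h0 h2L h0' h2L')) zero_le_two
  rw [← mul_assoc] at hscaled
  refine hscaled.trans_eq ?_
  rw [← intervalIntegral.integral_const_mul]
  refine intervalIntegral.integral_congr fun s _ => ?_
  simp only [two_sub_eq_two_mul_sqrt_sq hx0 hL]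
  ring

/-- coercivity of the second variation of `F − λA` at the critical configuration,
with `λ = 2L/(L+x₀)`. -/
theorem statement18 (x0 L : ℝ) (hx0 : 0 < x0) (hL : 3 * x0 < L) :
    ∃ C > (0:ℝ), ∀ φ : ℝ → ℝ, ContDiff ℝ 2 φ →
      φ 0 = 0 → φ (2 * L) = 0 → deriv φ 0 = 0 → deriv φ (2 * L) = 0 →
      (∫ s in (0:ℝ)..(2 * L),
          ((2 - 2 * L / (L + x0)) * Hc x0 L s * φ s ^ 2 -
            2 * deriv φ s ^ 2 / Hc x0 L s +
            2 * deriv (deriv φ) s ^ 2 / Hc x0 L s ^ 3)) ≥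
        C * ∫ s in (0:ℝ)..(2 * L),
          (φ s ^ 2 + deriv φ s ^ 2 + deriv (deriv φ) s ^ 2) :=
  statement18_general x0 L hx0 (by linarith) hL.ne'
end

section
/- Fix x₀ > 0 and L > 3x₀, let γ be the critical curve with curvature H and normal N = γ̇^⊥, and let λ = 2L/(L+x₀). There exists ε > 0 such that for every φ ∈ C²([0,2L], ℝ) with φ not identically zero, φ(0) = φ(2L) = 0, φ̇(0) = φ̇(2L) = 0, and sup_{s∈[0,2L]}(|φ(s)| + |φ̇(s)| + |φ̈(s)|) ≤ ε, the perturbed curve c = γ + φN satisfies ⟨ċ(s), c̈(s)^⊥⟩ > 0 for all s, and the strict inequality F(γ) − λ·A(γ) < F(c) − λ·A(c) holds. In particular, if A(c) = A(γ) then F(γ) < F(c). -/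
open Real Set

noncomputable def xc (x0 L s : ℝ) : ℝ :=
  -(kap x0 L / 2) *
    ((sig x0 L / (π + sig x0 L)) *
        Real.sin (((π + sig x0 L) / sig x0 L) * Real.arcsin ((s - L) / kap x0 L)) +
      (sig x0 L / (π - sig x0 L)) *
        Real.sin (((π - sig x0 L) / sig x0 L) * Real.arcsin ((s - L) / kap x0 L)))

noncomputable def yc (x0 L s : ℝ) : ℝ :=
  kap x0 L / 2 *
    ((sig x0 L / (π + sig x0 L)) *
        Real.cos (((π + sig x0 L) / sig x0 L) * Real.arcsin ((s - L) / kap x0 L)) +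
      (sig x0 L / (π - sig x0 L)) *
        Real.cos (((π - sig x0 L) / sig x0 L) * Real.arcsin ((s - L) / kap x0 L))) +
  π * x0 / (sig x0 L * Real.tan (sig x0 L))

/-- total inverse curvature `F(c) = ∫₀^{2L} |ċ|⁴/⟨ċ, c̈^⊥⟩ ds` of the plane curve `c = (u,v)`,
where `(a₁,a₂)^⊥ = (a₂,−a₁)` -/
noncomputable def Ffun (L : ℝ) (u v : ℝ → ℝ) : ℝ :=
  ∫ s in (0:ℝ)..(2 * L),
    (deriv u s ^ 2 + deriv v s ^ 2) ^ 2 /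
      (deriv u s * deriv (deriv v) s - deriv v s * deriv (deriv u) s)

/-- signed enclosed area `A(c) = (1/2)∫₀^{2L} ⟨c, ċ^⊥⟩ ds` of the plane curve `c = (u,v)` -/
noncomputable def Afun (L : ℝ) (u v : ℝ → ℝ) : ℝ :=
  1 / 2 * ∫ s in (0:ℝ)..(2 * L), (u s * deriv v s - v s * deriv u s)

/-- first component of the normal graph `c = γ + φN`, with `N = γ̇^⊥ = (ẏ, −ẋ)` -/
noncomputable def pc1 (x0 L : ℝ) (φ : ℝ → ℝ) (s : ℝ) : ℝ :=
  xc x0 L s + φ s * deriv (yc x0 L) s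

/-- second component of the normal graph `c = γ + φN` -/
noncomputable def pc2 (x0 L : ℝ) (φ : ℝ → ℝ) (s : ℝ) : ℝ :=
  yc x0 L s - φ s * deriv (xc x0 L) s

/-!
Let `ρ = 1 / H` be the radius of curvature and `μ = (σ / π)² = x₀ / (L + x₀)`, so that
`λ = 2 (1 - μ)`. Expanded in the normal variation `φ`, the first-order part of `F - λA` integrates
to zero because `(ρ²)¨ = -2μ = λ - 2`. In the tangent angle `α`, `ds = ρ dα`, which runs over an
interval of length `2π`, the second-order part becomes, up to boundary terms,

  `∫ (f''² - (1 + μ) f'² + μ f²) = (1 - μ) ∫ (f''² - f'²) + μ ∫ (f'' + f)²`.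

The first term is nonnegative by Wirtinger's inequality for `f'`, which is periodic with mean zero.
A Gronwall estimate for `f'' + f` with vanishing initial data shows that the second one dominates
the `H²` norm. The remainder is cubic, hence at most `C ε` times the squared `H²` norm of `φ`, and
is absorbed once `ε` is small.
-/

open MeasureTheory (volume MemLp)

/-! ### Wirtinger and Gronwall estimates -/

lemma memLp_restrict_Ioc_of_continuousOn {E : Type*} [NormedAddCommGroup E] {a b : ℝ} {f : ℝ → E}
    {p : ENNReal} (hf : ContinuousOn f (Icc a b)) : MemLp f p (volume.restrict (Ioc a b)) := by
  obtain ⟨C, hC⟩ := isCompact_Icc.exists_bound_of_continuousOn hf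
  refine MemLp.of_bound ((hf.mono Ioc_subset_Icc_self).aestronglyMeasurable measurableSet_Ioc) C ?_
  filter_upwards [MeasureTheory.ae_restrict_mem measurableSet_Ioc] with x hx
    using hC x (Ioc_subset_Icc_self hx)

lemma sq_norm_fourierCoeffOn_le_of_hasDerivAt {a b : ℝ} (hab : a < b) {f f' : ℝ → ℂ}
    (hf : ∀ x ∈ Icc a b, HasDerivAt f (f' x) x) (hf' : ContinuousOn f' (Icc a b))
    (hfab : f a = f b) {n : ℤ} (hn : n ≠ 0) :
    (2 * π / (b - a)) ^ 2 * ‖fourierCoeffOn hab f n‖ ^ 2 ≤ ‖fourierCoeffOn hab f' n‖ ^ 2 := by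
  rw [← uIcc_of_le hab.le] at hf hf'
  have hba : 0 < b - a := sub_pos.2 hab
  have hn1 : (1 : ℝ) ≤ |(n : ℝ)| := by exact_mod_cast Int.one_le_abs hn
  have hcoeff : ‖fourierCoeffOn hab f' n‖ =
      2 * π / (b - a) * |(n : ℝ)| * ‖fourierCoeffOn hab f n‖ := by
    have hnorm : ‖(b : ℂ) - a‖ = b - a := by
      rw [← Complex.ofReal_sub, Complex.norm_real, norm_of_nonneg hba.le]
    rw [fourierCoeffOn_of_hasDerivAt hab hn hf hf'.intervalIntegrable, hfab]
    simp only [sub_self, mul_zero, zero_sub, norm_mul, norm_div, norm_neg, norm_one, hnorm,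
      RCLike.norm_ofNat, Complex.norm_real, norm_eq_abs, abs_of_pos pi_pos, Complex.norm_I,
      Complex.norm_intCast]
    field_simp
  rw [← mul_pow, hcoeff]
  gcongr
  exact le_mul_of_one_le_right (by positivity) hn1

theorem wirtinger_inequality {a b : ℝ} (hab : a < b) {f f' : ℝ → ℝ}
    (hf : ∀ x ∈ Icc a b, HasDerivAt f (f' x) x) (hf' : ContinuousOn f' (Icc a b))
    (hfab : f a = f b) (hmean : ∫ x in a..b, f x = 0) :
    (2 * π / (b - a)) ^ 2 * ∫ x in a..b, f x ^ 2 ≤ ∫ x in a..b, f' x ^ 2 := by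
  have parseval {g : ℝ → ℝ} (hg : ContinuousOn g (Icc a b)) :
      HasSum (fun n ↦ ‖fourierCoeffOn hab (fun x ↦ (g x : ℂ)) n‖ ^ 2)
        ((b - a)⁻¹ * ∫ x in a..b, g x ^ 2) := by
    have hL2 : MemLp (fun x ↦ (g x : ℂ)) 2 (volume.restrict (Ioc a b)) :=
      memLp_restrict_Ioc_of_continuousOn (Complex.continuous_ofReal.comp_continuousOn hg)
    simpa using hasSum_sq_fourierCoeffOn hab hL2
  have hcoeff : ∀ n : ℤ, (2 * π / (b - a)) ^ 2 * ‖fourierCoeffOn hab (fun x ↦ (f x : ℂ)) n‖ ^ 2 ≤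
      ‖fourierCoeffOn hab (fun x ↦ (f' x : ℂ)) n‖ ^ 2 := fun n ↦ by
    rcases eq_or_ne n 0 with rfl | hn
    · have h0 : fourierCoeffOn hab (fun x ↦ (f x : ℂ)) 0 = 0 := by
        simp [fourierCoeffOn_eq_integral, intervalIntegral.integral_ofReal, hmean]
      simp [h0]
    · exact sq_norm_fourierCoeffOn_le_of_hasDerivAt hab (fun x hx ↦ (hf x hx).ofReal_comp)
        (Complex.continuous_ofReal.comp_continuousOn hf') (by rw [hfab]) hn
  have hle := hasSum_le hcoeff
    ((parseval fun x hx ↦ (hf x hx).continuousAt.continuousWithinAt).mul_left _) (parseval hf')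
  rwa [mul_left_comm, mul_le_mul_iff_right₀ (inv_pos.2 (sub_pos.2 hab))] at hle

lemma integral_sq_add_sq_add_sq_le {a b : ℝ} (hab : a ≤ b) {f f' f'' : ℝ → ℝ}
    (hf : ∀ x ∈ Icc a b, HasDerivAt f (f' x) x) (hf' : ∀ x ∈ Icc a b, HasDerivAt f' (f'' x) x)
    (hf'' : ContinuousOn f'' (Icc a b)) (hfa : f a = 0) (hfa' : f' a = 0) :
    ∫ x in a..b, (f x ^ 2 + f' x ^ 2 + f'' x ^ 2) ≤
      (12 * exp (b - a) + 2) * ∫ x in a..b, (f'' x + f x) ^ 2 := by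
  rw [← uIcc_of_le hab] at hf hf' hf''
  have hfc : ContinuousOn f (uIcc a b) := fun x hx ↦ (hf x hx).continuousAt.continuousWithinAt
  have hfc' : ContinuousOn f' (uIcc a b) := fun x hx ↦ (hf' x hx).continuousAt.continuousWithinAt
  set energyDeriv : ℝ → ℝ := fun x ↦
    exp (b - x) * (2 * f' x * (f'' x + f x) - (f x ^ 2 + f' x ^ 2)) with hED
  have hEDint : IntervalIntegrable energyDeriv volume a b :=
    ContinuousOn.intervalIntegrable (by fun_prop)
  have henergy : 0 ≤ ∫ x in a..b, energyDeriv x := by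
    have hderiv : ∀ x ∈ uIcc a b,
        HasDerivAt (fun x ↦ exp (b - x) * (f x ^ 2 + f' x ^ 2)) (energyDeriv x) x := fun x hx ↦ by
      refine (((hasDerivAt_id x).const_sub b).exp.mul
        (((hf x hx).pow 2).add ((hf' x hx).pow 2))).congr_deriv ?_
      simp only [hED, id, Pi.add_apply, Pi.pow_apply]
      ring
    rw [intervalIntegral.integral_eq_sub_of_hasDerivAt hderiv hEDint, hfa, hfa']
    simpa using add_nonneg (sq_nonneg (f b)) (sq_nonneg (f' b))
  have hpoint : ∀ x ∈ Icc a b, f x ^ 2 + f' x ^ 2 + f'' x ^ 2 ≤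
      (12 * exp (b - a) + 2) * (f'' x + f x) ^ 2 - 6 * energyDeriv x := fun x hx ↦ by
    have hweight : 1 ≤ exp (b - x) := one_le_exp (by linarith [hx.2])
    have hweight_le : exp (b - x) ≤ exp (b - a) := exp_le_exp.2 (by linarith [hx.1])
    have young : 0 ≤ exp (b - x) * (2 * (f'' x + f x) - f' x) ^ 2 := by positivity
    have hf''x : f'' x ^ 2 ≤ 2 * (f'' x + f x) ^ 2 + 2 * f x ^ 2 := by
      linarith [sq_nonneg (f'' x + 2 * f x)]
    simp only [hED]
    linarith [mul_le_mul_of_nonneg_right hweight (add_nonneg (sq_nonneg (f x)) (sq_nonneg (f' x))),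
      mul_le_mul_of_nonneg_right hweight_le (sq_nonneg (f'' x + f x)), sq_nonneg (f' x),
      mul_nonneg (exp_pos (b - x)).le (sq_nonneg (f x))]
  calc ∫ x in a..b, (f x ^ 2 + f' x ^ 2 + f'' x ^ 2)
      ≤ ∫ x in a..b, ((12 * exp (b - a) + 2) * (f'' x + f x) ^ 2 - 6 * energyDeriv x) :=
        intervalIntegral.integral_mono_on hab (ContinuousOn.intervalIntegrable (by fun_prop))
          (ContinuousOn.intervalIntegrable (by fun_prop)) hpoint
    _ = (12 * exp (b - a) + 2) * (∫ x in a..b, (f'' x + f x) ^ 2) -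
          6 * ∫ x in a..b, energyDeriv x := by
        rw [intervalIntegral.integral_sub (ContinuousOn.intervalIntegrable (by fun_prop))
          (hEDint.const_mul 6), intervalIntegral.integral_const_mul,
          intervalIntegral.integral_const_mul]
    _ ≤ _ := by linarith

theorem integral_quadratic_form_coercive {a b μ : ℝ} (hab : a < b) (hlen : b - a ≤ 2 * π)
    (hμ0 : 0 ≤ μ) (hμ1 : μ ≤ 1) {f f' f'' : ℝ → ℝ}
    (hf : ∀ x ∈ Icc a b, HasDerivAt f (f' x) x) (hf' : ∀ x ∈ Icc a b, HasDerivAt f' (f'' x) x)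
    (hf'' : ContinuousOn f'' (Icc a b)) (hfa : f a = 0) (hfb : f b = 0) (hfa' : f' a = 0)
    (hfb' : f' b = 0) :
    μ / (12 * exp (b - a) + 2) * ∫ x in a..b, (f x ^ 2 + f' x ^ 2 + f'' x ^ 2) ≤
      ∫ x in a..b, (f'' x ^ 2 - (1 + μ) * f' x ^ 2 + μ * f x ^ 2) := by
  have hfc : ContinuousOn f (Icc a b) := fun x hx ↦ (hf x hx).continuousAt.continuousWithinAt
  have hfc' : ContinuousOn f' (Icc a b) := fun x hx ↦ (hf' x hx).continuousAt.continuousWithinAt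
  have hgronwall := integral_sq_add_sq_add_sq_le hab.le hf hf' hf'' hfa hfa'
  rw [← uIcc_of_le hab.le] at hfc hfc'
  have hwirtinger : ∫ x in a..b, f' x ^ 2 ≤ ∫ x in a..b, f'' x ^ 2 := by
    have hmean : ∫ x in a..b, f' x = 0 := by
      rw [intervalIntegral.integral_eq_sub_of_hasDerivAt (by rwa [uIcc_of_le hab.le])
        hfc'.intervalIntegrable, hfa, hfb, sub_self]
    refine le_trans (le_mul_of_one_le_left ?_ ?_)
      (wirtinger_inequality hab hf' hf'' (hfa'.trans hfb'.symm) hmean)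
    · exact intervalIntegral.integral_nonneg hab.le fun x _ ↦ sq_nonneg _
    · exact one_le_pow₀ ((one_le_div₀ (sub_pos.2 hab)).2 hlen)
  rw [← uIcc_of_le hab.le] at hf hf' hf''
  have hparts : ∫ x in a..b, (f' x ^ 2 + f x * f'' x) = 0 := by
    rw [intervalIntegral.integral_eq_sub_of_hasDerivAt (f := fun x ↦ f x * f' x)
      (fun x hx ↦ ((hf x hx).mul (hf' x hx)).congr_deriv (by ring))
      (ContinuousOn.intervalIntegrable (by fun_prop)), hfa, hfb]
    ring
  have hsplit : ∫ x in a..b, (f'' x ^ 2 - (1 + μ) * f' x ^ 2 + μ * f x ^ 2) =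
      (1 - μ) * ((∫ x in a..b, f'' x ^ 2) - ∫ x in a..b, f' x ^ 2) +
        μ * (∫ x in a..b, (f'' x + f x) ^ 2) -
        2 * μ * ∫ x in a..b, (f' x ^ 2 + f x * f'' x) := by
    rw [← intervalIntegral.integral_sub, ← intervalIntegral.integral_const_mul,
      ← intervalIntegral.integral_const_mul, ← intervalIntegral.integral_const_mul,
      ← intervalIntegral.integral_add, ← intervalIntegral.integral_sub]
    · exact intervalIntegral.integral_congr fun x _ ↦ by ring
    all_goals exact ContinuousOn.intervalIntegrable (by fun_prop)
  calc μ / (12 * exp (b - a) + 2) * ∫ x in a..b, (f x ^ 2 + f' x ^ 2 + f'' x ^ 2)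
      ≤ μ / (12 * exp (b - a) + 2) *
          ((12 * exp (b - a) + 2) * ∫ x in a..b, (f'' x + f x) ^ 2) := by gcongr
    _ = μ * ∫ x in a..b, (f'' x + f x) ^ 2 := by field_simp
    _ ≤ _ := by
      rw [hsplit, hparts]
      linarith [mul_nonneg (sub_nonneg.2 hμ1) (sub_nonneg.2 hwirtinger)]

/-! ### Inverse curvature to second order -/

/-- `ρ ⟨ċ, c̈^⊥⟩` for the normal graph `c = γ + φN` over an arc with radius of curvature `ρ`, in the
dimensionless variables `a = φ/ρ`, `b = φ̇`, `v = ρφ̈`, `e = -φρ̇/ρ`. -/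
def relCurvature (a b v e : ℝ) : ℝ := (1 + a) ^ 2 - v * (1 + a) + 2 * b ^ 2 + b * e

/-- Second-order Taylor polynomial at the origin of `((1 + a)² + b²)² / relCurvature a b v e`, which
is `|ċ|⁴ / ⟨ċ, c̈^⊥⟩` divided by `ρ`. -/
def inverseCurvatureTaylor (a b v e : ℝ) : ℝ :=
  1 + 2 * a + v + a ^ 2 + a * v - b * e + v ^ 2

section Taylor

variable {δ a b v e : ℝ}

lemma half_le_relCurvature (hδ : δ ≤ 1 / 20) (ha : |a| ≤ δ) (hb : |b| ≤ δ) (hv : |v| ≤ δ)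
    (he : |e| ≤ δ) : 1 / 2 ≤ relCurvature a b v e := by
  have hva : |v * (1 + a)| ≤ 1 / 20 * 2 := by
    rw [abs_mul]
    gcongr
    · exact hv.trans hδ
    · rw [abs_le] at *
      constructor <;> linarith
  have hbe : |b * e| ≤ 1 / 20 * (1 / 20) := by
    rw [abs_mul]
    gcongr
    · exact hb.trans hδ
    · exact he.trans hδ
  unfold relCurvature
  linarith [(abs_le.1 hva).2, (abs_le.1 hbe).1, (abs_le.1 ha).1, sq_nonneg a, sq_nonneg b]

lemma relCurvature_mul_inverseCurvatureTaylor :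
    ((1 + a) ^ 2 + b ^ 2) ^ 2 - relCurvature a b v e * inverseCurvatureTaylor a b v e =
      b ^ 4 - v * (1 + a) * (b * e) + v * (1 + a) * v ^ 2 -
        (2 * b ^ 2 + b * e) * (v * (1 + a) - b * e + v ^ 2) := by
  unfold relCurvature inverseCurvatureTaylor
  ring

lemma relCurvature_mul_inverseCurvatureTaylor_le (hδ : δ ≤ 1 / 20) (ha : |a| ≤ δ) (hb : |b| ≤ δ)
    (hv : |v| ≤ δ) (he : |e| ≤ δ) :
    relCurvature a b v e * inverseCurvatureTaylor a b v e -
        15 * δ * (a ^ 2 + b ^ 2 + v ^ 2 + e ^ 2) ≤ ((1 + a) ^ 2 + b ^ 2) ^ 2 := by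
  set S := a ^ 2 + b ^ 2 + v ^ 2 + e ^ 2 with hS
  have hδ0 : 0 ≤ δ := (abs_nonneg a).trans ha
  have hS0 : 0 ≤ S := by positivity
  have hva : |v * (1 + a)| ≤ δ * 2 := by
    rw [abs_mul]
    gcongr
    rw [abs_le] at *
    constructor <;> linarith
  have hbe_sq : |b * e| ≤ (b ^ 2 + e ^ 2) / 2 :=
    abs_le.2 ⟨by linarith [sq_nonneg (b + e)], by linarith [sq_nonneg (b - e)]⟩
  have hbe : |b * e| ≤ δ * (1 / 20) := by
    rw [abs_mul]
    gcongr
    exact he.trans hδ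
  have hv2 : v ^ 2 ≤ δ * (1 / 20) := by
    rw [← sq_abs, sq]
    gcongr
    exact hv.trans hδ
  have term₁ : |v * (1 + a) * (b * e)| ≤ δ * 2 * (S / 2) := by
    rw [abs_mul]
    gcongr
    linarith [sq_nonneg a, sq_nonneg v]
  have term₂ : |v * (1 + a) * v ^ 2| ≤ δ * 2 * S := by
    rw [abs_mul, abs_of_nonneg (sq_nonneg v)]
    gcongr
    linarith [sq_nonneg a, sq_nonneg b, sq_nonneg e]
  have term₃ : |(2 * b ^ 2 + b * e) * (v * (1 + a) - b * e + v ^ 2)| ≤ 5 / 2 * S * (3 * δ) := by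
    rw [abs_mul]
    gcongr
    · rw [abs_le] at hbe_sq ⊢
      constructor <;> linarith [sq_nonneg a, sq_nonneg b, sq_nonneg v, sq_nonneg e]
    · rw [abs_le] at hbe hva ⊢
      constructor <;> linarith [sq_nonneg v]
  have hb4 : 0 ≤ b ^ 4 := by positivity
  linarith [relCurvature_mul_inverseCurvatureTaylor (a := a) (b := b) (v := v) (e := e),
    (abs_le.1 term₁).2, (abs_le.1 term₂).1, (abs_le.1 term₃).2, mul_nonneg hδ0 hS0]

lemma inverseCurvatureTaylor_le_div (hδ : δ ≤ 1 / 20) (ha : |a| ≤ δ) (hb : |b| ≤ δ)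
    (hv : |v| ≤ δ) (he : |e| ≤ δ) :
    inverseCurvatureTaylor a b v e - 30 * δ * (a ^ 2 + b ^ 2 + v ^ 2 + e ^ 2) ≤
      ((1 + a) ^ 2 + b ^ 2) ^ 2 / relCurvature a b v e := by
  have hδ0 : 0 ≤ δ := (abs_nonneg a).trans ha
  have hhalf := half_le_relCurvature hδ ha hb hv he
  have herror : 0 ≤ 30 * δ * (a ^ 2 + b ^ 2 + v ^ 2 + e ^ 2) := by positivity
  rw [le_div_iff₀ (by linarith)]
  linarith [relCurvature_mul_inverseCurvatureTaylor_le hδ ha hb hv he,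
    mul_le_mul_of_nonneg_right hhalf herror]

end Taylor

/-! ### Normal graphs over convex arcs -/

/-- On `J`, the plane curve `(x, y)` has unit tangent `(-cos α, -sin α)` and radius of curvature
`ρ > 0`, that is `α̇ = 1/ρ`. -/
structure IsConvexArc (J : Set ℝ) (x y α ρ : ℝ → ℝ) : Prop where
  isOpen : IsOpen J
  radius_pos : ∀ s ∈ J, 0 < ρ s
  hasDerivAt_fst : ∀ s ∈ J, HasDerivAt x (-cos (α s)) s
  hasDerivAt_snd : ∀ s ∈ J, HasDerivAt y (-sin (α s)) s
  hasDerivAt_angle : ∀ s ∈ J, HasDerivAt α (1 / ρ s) s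

/-- First component of `γ + φN` for the curve `γ = (x, y)`, where `N = γ̇^⊥ = (ẏ, -ẋ)`. -/
noncomputable def normalGraphFst (x y φ : ℝ → ℝ) (s : ℝ) : ℝ := x s + φ s * deriv y s

/-- Second component of `γ + φN`. -/
noncomputable def normalGraphSnd (x y φ : ℝ → ℝ) (s : ℝ) : ℝ := y s - φ s * deriv x s

lemma hasDerivAt_of_contDiff_two {φ : ℝ → ℝ} (hφ : ContDiff ℝ 2 φ) (s : ℝ) :
    HasDerivAt φ (deriv φ s) s :=
  (hφ.differentiable two_ne_zero s).hasDerivAt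

lemma hasDerivAt_deriv_of_contDiff_two {φ : ℝ → ℝ} (hφ : ContDiff ℝ 2 φ) (s : ℝ) :
    HasDerivAt (deriv φ) (deriv (deriv φ) s) s :=
  ((hφ.deriv' (n := 1)).differentiable one_ne_zero s).hasDerivAt

lemma continuous_deriv_deriv_of_contDiff_two {φ : ℝ → ℝ} (hφ : ContDiff ℝ 2 φ) :
    Continuous (deriv (deriv φ)) :=
  (hφ.deriv' (n := 1)).continuous_deriv le_rfl

namespace IsConvexArc

variable {J : Set ℝ} {x y α ρ φ : ℝ → ℝ} {ρ' s : ℝ}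

lemma deriv_fst (h : IsConvexArc J x y α ρ) (hs : s ∈ J) : deriv x s = -cos (α s) :=
  (h.hasDerivAt_fst s hs).deriv

lemma deriv_snd (h : IsConvexArc J x y α ρ) (hs : s ∈ J) : deriv y s = -sin (α s) :=
  (h.hasDerivAt_snd s hs).deriv

lemma hasDerivAt_cos_angle (h : IsConvexArc J x y α ρ) (hs : s ∈ J) :
    HasDerivAt (fun t ↦ cos (α t)) (-sin (α s) * (1 / ρ s)) s :=
  (h.hasDerivAt_angle s hs).cos

lemma hasDerivAt_sin_angle (h : IsConvexArc J x y α ρ) (hs : s ∈ J) :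
    HasDerivAt (fun t ↦ sin (α t)) (cos (α s) * (1 / ρ s)) s :=
  (h.hasDerivAt_angle s hs).sin

lemma hasDerivAt_normalGraphFst (h : IsConvexArc J x y α ρ) (hφ : DifferentiableAt ℝ φ s)
    (hs : s ∈ J) :
    HasDerivAt (normalGraphFst x y φ)
      (-((1 + φ s / ρ s) * cos (α s)) - deriv φ s * sin (α s)) s := by
  have hgraph : normalGraphFst x y φ =ᶠ[nhds s] fun t ↦ x t - φ t * sin (α t) := by
    filter_upwards [h.isOpen.mem_nhds hs] with t ht
    rw [normalGraphFst, h.deriv_snd ht]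
    ring
  exact (((h.hasDerivAt_fst s hs).sub (hφ.hasDerivAt.mul (h.hasDerivAt_sin_angle hs))).congr_deriv
    (by ring)).congr_of_eventuallyEq hgraph

lemma hasDerivAt_normalGraphSnd (h : IsConvexArc J x y α ρ) (hφ : DifferentiableAt ℝ φ s)
    (hs : s ∈ J) :
    HasDerivAt (normalGraphSnd x y φ)
      (-((1 + φ s / ρ s) * sin (α s)) + deriv φ s * cos (α s)) s := by
  have hgraph : normalGraphSnd x y φ =ᶠ[nhds s] fun t ↦ y t + φ t * cos (α t) := by
    filter_upwards [h.isOpen.mem_nhds hs] with t ht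
    rw [normalGraphSnd, h.deriv_fst ht]
    ring
  exact (((h.hasDerivAt_snd s hs).add (hφ.hasDerivAt.mul (h.hasDerivAt_cos_angle hs))).congr_deriv
    (by ring)).congr_of_eventuallyEq hgraph

lemma speed_sq_normalGraph (h : IsConvexArc J x y α ρ) (hφ : DifferentiableAt ℝ φ s) (hs : s ∈ J) :
    deriv (normalGraphFst x y φ) s ^ 2 + deriv (normalGraphSnd x y φ) s ^ 2 =
      (1 + φ s / ρ s) ^ 2 + deriv φ s ^ 2 := by
  rw [(h.hasDerivAt_normalGraphFst hφ hs).deriv, (h.hasDerivAt_normalGraphSnd hφ hs).deriv]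
  linear_combination ((1 + φ s / ρ s) ^ 2 + deriv φ s ^ 2) * sin_sq_add_cos_sq (α s)

lemma hasDerivAt_one_add_div_radius (h : IsConvexArc J x y α ρ) (hρ : HasDerivAt ρ ρ' s)
    (hφ : DifferentiableAt ℝ φ s) (hs : s ∈ J) :
    HasDerivAt (fun t ↦ 1 + φ t / ρ t) ((deriv φ s + -(φ s * ρ') / ρ s) / ρ s) s := by
  have hρs := (h.radius_pos s hs).ne'
  refine ((hφ.hasDerivAt.div hρ hρs).const_add 1).congr_deriv ?_
  field_simp
  ring

lemma deriv_deriv_normalGraphFst (h : IsConvexArc J x y α ρ) (hρ : HasDerivAt ρ ρ' s)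
    (hφ : ContDiff ℝ 2 φ) (hs : s ∈ J) :
    deriv (deriv (normalGraphFst x y φ)) s =
      -((deriv φ s + -(φ s * ρ') / ρ s) / ρ s + deriv φ s / ρ s) * cos (α s) +
        ((1 + φ s / ρ s) / ρ s - deriv (deriv φ) s) * sin (α s) := by
  have hdiff := hφ.differentiable two_ne_zero
  have hderiv : deriv (normalGraphFst x y φ) =ᶠ[nhds s]
      fun t ↦ -((1 + φ t / ρ t) * cos (α t)) - deriv φ t * sin (α t) := by
    filter_upwards [h.isOpen.mem_nhds hs] with t ht
    exact (h.hasDerivAt_normalGraphFst (hdiff t) ht).deriv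
  refine ((((h.hasDerivAt_one_add_div_radius hρ (hdiff s) hs).mul
    (h.hasDerivAt_cos_angle hs)).neg.sub ((hasDerivAt_deriv_of_contDiff_two hφ s).mul
      (h.hasDerivAt_sin_angle hs))).congr_of_eventuallyEq hderiv).deriv.trans ?_
  ring

lemma deriv_deriv_normalGraphSnd (h : IsConvexArc J x y α ρ) (hρ : HasDerivAt ρ ρ' s)
    (hφ : ContDiff ℝ 2 φ) (hs : s ∈ J) :
    deriv (deriv (normalGraphSnd x y φ)) s =
      -((deriv φ s + -(φ s * ρ') / ρ s) / ρ s + deriv φ s / ρ s) * sin (α s) -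
        ((1 + φ s / ρ s) / ρ s - deriv (deriv φ) s) * cos (α s) := by
  have hdiff := hφ.differentiable two_ne_zero
  have hderiv : deriv (normalGraphSnd x y φ) =ᶠ[nhds s]
      fun t ↦ -((1 + φ t / ρ t) * sin (α t)) + deriv φ t * cos (α t) := by
    filter_upwards [h.isOpen.mem_nhds hs] with t ht
    exact (h.hasDerivAt_normalGraphSnd (hdiff t) ht).deriv
  refine ((((h.hasDerivAt_one_add_div_radius hρ (hdiff s) hs).mul
    (h.hasDerivAt_sin_angle hs)).neg.add ((hasDerivAt_deriv_of_contDiff_two hφ s).mul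
      (h.hasDerivAt_cos_angle hs))).congr_of_eventuallyEq hderiv).deriv.trans ?_
  ring

lemma det_normalGraph (h : IsConvexArc J x y α ρ) (hρ : HasDerivAt ρ ρ' s)
    (hφ : ContDiff ℝ 2 φ) (hs : s ∈ J) :
    deriv (normalGraphFst x y φ) s * deriv (deriv (normalGraphSnd x y φ)) s -
        deriv (normalGraphSnd x y φ) s * deriv (deriv (normalGraphFst x y φ)) s =
      relCurvature (φ s / ρ s) (deriv φ s) (ρ s * deriv (deriv φ) s) (-(φ s * ρ') / ρ s) / ρ s := by
  have hdiff := hφ.differentiable two_ne_zero s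
  have hρs := (h.radius_pos s hs).ne'
  have hrel : relCurvature (φ s / ρ s) (deriv φ s) (ρ s * deriv (deriv φ) s)
      (-(φ s * ρ') / ρ s) / ρ s = (1 + φ s / ρ s) * ((1 + φ s / ρ s) / ρ s - deriv (deriv φ) s) +
        deriv φ s * ((deriv φ s + -(φ s * ρ') / ρ s) / ρ s + deriv φ s / ρ s) := by
    unfold relCurvature
    field_simp
    ring
  rw [(h.hasDerivAt_normalGraphFst hdiff hs).deriv, (h.hasDerivAt_normalGraphSnd hdiff hs).deriv,
    h.deriv_deriv_normalGraphFst hρ hφ hs, h.deriv_deriv_normalGraphSnd hρ hφ hs, hrel]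
  linear_combination ((1 + φ s / ρ s) * ((1 + φ s / ρ s) / ρ s - deriv (deriv φ) s) +
    deriv φ s * ((deriv φ s + -(φ s * ρ') / ρ s) / ρ s + deriv φ s / ρ s)) *
      sin_sq_add_cos_sq (α s)

end IsConvexArc

/-! ### First and second variation -/

/-- Admissible normal variations on `[a, b]`: class `C²`, vanishing to first order at both ends. -/
structure IsClamped_s19 (a b : ℝ) (φ : ℝ → ℝ) : Prop where
  contDiff : ContDiff ℝ 2 φ
  left : φ a = 0
  right : φ b = 0
  deriv_left : deriv φ a = 0
  deriv_right : deriv φ b = 0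

/-- Euler–Lagrange equation `(ρ²)¨ = λ - 2` of `F - λA` for the radius of curvature `ρ` as a
function of arc length, with derivative `ρ'` and `λ = 2 (1 - μ)`. -/
structure IsCriticalRadius (J : Set ℝ) (μ : ℝ) (ρ ρ' : ℝ → ℝ) : Prop where
  pos : ∀ s ∈ J, 0 < ρ s
  hasDerivAt : ∀ s ∈ J, HasDerivAt ρ (ρ' s) s
  hasDerivAt_mul : ∀ s ∈ J, HasDerivAt (fun t ↦ ρ t * ρ' t) (-μ) s

/-- `M ≥ 1` bounds `ρ > 0`, `1 / ρ` and `|ρ' / ρ|` at `s`. -/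
structure IsRadiusBound (M : ℝ) (ρ ρ' : ℝ → ℝ) (s : ℝ) : Prop where
  one_le : 1 ≤ M
  pos : 0 < ρ s
  radius_le : ρ s ≤ M
  inv_le : (ρ s)⁻¹ ≤ M
  abs_logDeriv_le : |ρ' s / ρ s| ≤ M

/-- `relCurvature` along the normal graph of `φ` over an arc with radius of curvature `ρ`. -/
noncomputable def graphRelCurvature (ρ ρ' φ : ℝ → ℝ) (s : ℝ) : ℝ :=
  relCurvature (φ s / ρ s) (deriv φ s) (ρ s * deriv (deriv φ) s) (-(φ s * ρ' s) / ρ s)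

/-- Second-order Taylor polynomial in `φ` of `graphInverseCurvature` below. -/
noncomputable def graphInverseCurvatureTaylor (ρ ρ' φ : ℝ → ℝ) (s : ℝ) : ℝ :=
  ρ s * inverseCurvatureTaylor (φ s / ρ s) (deriv φ s) (ρ s * deriv (deriv φ) s)
    (-(φ s * ρ' s) / ρ s)

/-- Integrand of the quadratic part of `F - 2 (1 - μ) A` in the normal variation `φ`. -/
noncomputable def secondVariation (μ : ℝ) (ρ ρ' φ : ℝ → ℝ) (s : ℝ) : ℝ :=
  ρ s ^ 3 * deriv (deriv φ) s ^ 2 + ρ s * φ s * deriv (deriv φ) s + ρ' s * φ s * deriv φ s +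
    μ * φ s ^ 2 / ρ s

/-- Integrand of the squared `H²` norm. -/
noncomputable def sobolevDensity (φ : ℝ → ℝ) (s : ℝ) : ℝ :=
  φ s ^ 2 + deriv φ s ^ 2 + deriv (deriv φ) s ^ 2

/-- `|ċ|⁴ / ⟨ċ, c̈^⊥⟩` for the normal graph `c` of `φ` over an arc with radius of curvature `ρ`. -/
noncomputable def graphInverseCurvature (ρ ρ' φ : ℝ → ℝ) (s : ℝ) : ℝ :=
  ρ s * (((1 + φ s / ρ s) ^ 2 + deriv φ s ^ 2) ^ 2 / graphRelCurvature ρ ρ' φ s)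

lemma continuous_sobolevDensity {φ : ℝ → ℝ} (hφ : ContDiff ℝ 2 φ) :
    Continuous (sobolevDensity φ) :=
  ((hφ.continuous.pow 2).add ((hφ.continuous_deriv one_le_two).pow 2)).add
    ((continuous_deriv_deriv_of_contDiff_two hφ).pow 2)

lemma sobolevDensity_nonneg (φ : ℝ → ℝ) (s : ℝ) : 0 ≤ sobolevDensity φ s := by
  unfold sobolevDensity
  positivity

lemma integral_sobolevDensity_pos {a b : ℝ} (hab : a < b) {φ : ℝ → ℝ} (hφ : ContDiff ℝ 2 φ)
    (hne : ∃ s ∈ Icc a b, φ s ≠ 0) : 0 < ∫ s in a..b, sobolevDensity φ s := by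
  obtain ⟨s, hs, hφs⟩ := hne
  refine intervalIntegral.integral_pos hab (continuous_sobolevDensity hφ).continuousOn
    (fun t _ ↦ sobolevDensity_nonneg φ t) ⟨s, hs, ?_⟩
  unfold sobolevDensity
  positivity

namespace IsConvexArc

variable {J : Set ℝ} {L s : ℝ} {x y α ρ ρ' φ : ℝ → ℝ}

lemma Ffun_normalGraph (h : IsConvexArc J x y α ρ) (hρ : ∀ s ∈ J, HasDerivAt ρ (ρ' s) s)
    (hJ : uIcc 0 (2 * L) ⊆ J) (hφ : ContDiff ℝ 2 φ) :
    Ffun L (normalGraphFst x y φ) (normalGraphSnd x y φ) =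
      ∫ s in 0..2 * L, graphInverseCurvature ρ ρ' φ s := by
  refine intervalIntegral.integral_congr fun s hs ↦ ?_
  have hdiff := hφ.differentiable two_ne_zero s
  simp only [h.speed_sq_normalGraph hdiff (hJ hs), h.det_normalGraph (hρ s (hJ hs)) hφ (hJ hs),
    graphInverseCurvature, graphRelCurvature]
  rw [div_div_eq_mul_div, mul_comm, mul_div_assoc]

lemma Ffun_eq_integral_radius (h : IsConvexArc J x y α ρ) (hρ : ∀ s ∈ J, HasDerivAt ρ (ρ' s) s)
    (hJ : uIcc 0 (2 * L) ⊆ J) : Ffun L x y = ∫ s in 0..2 * L, ρ s := by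
  have hfst : normalGraphFst x y 0 = x := by ext; simp [normalGraphFst]
  have hsnd : normalGraphSnd x y 0 = y := by ext; simp [normalGraphSnd]
  have hF := h.Ffun_normalGraph hρ hJ (φ := 0) contDiff_const
  rw [hfst, hsnd] at hF
  simpa [graphInverseCurvature, graphRelCurvature, relCurvature] using hF

lemma continuousOn_curve (h : IsConvexArc J x y α ρ) :
    ContinuousOn x J ∧ ContinuousOn y J ∧ ContinuousOn α J :=
  ⟨fun s hs ↦ (h.hasDerivAt_fst s hs).continuousAt.continuousWithinAt,
    fun s hs ↦ (h.hasDerivAt_snd s hs).continuousAt.continuousWithinAt,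
    fun s hs ↦ (h.hasDerivAt_angle s hs).continuousAt.continuousWithinAt⟩

lemma areaDensity_eq (h : IsConvexArc J x y α ρ) (hs : s ∈ J) :
    x s * deriv y s - y s * deriv x s = y s * cos (α s) - x s * sin (α s) := by
  rw [h.deriv_fst hs, h.deriv_snd hs]
  ring

lemma areaDensity_normalGraph (h : IsConvexArc J x y α ρ) (hφ : DifferentiableAt ℝ φ s)
    (hs : s ∈ J) :
    normalGraphFst x y φ s * deriv (normalGraphSnd x y φ) s -
        normalGraphSnd x y φ s * deriv (normalGraphFst x y φ) s =
      (y s * cos (α s) - x s * sin (α s)) +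
        (deriv φ s * (x s * cos (α s) + y s * sin (α s)) +
          φ s * (-1 + (y s * cos (α s) - x s * sin (α s)) / ρ s)) +
        2 * (φ s + φ s ^ 2 / (2 * ρ s)) := by
  have hρ := (h.radius_pos s hs).ne'
  rw [(h.hasDerivAt_normalGraphFst hφ hs).deriv, (h.hasDerivAt_normalGraphSnd hφ hs).deriv,
    normalGraphFst, normalGraphSnd, h.deriv_fst hs, h.deriv_snd hs]
  field_simp
  linear_combination (φ s * (φ s + ρ s)) * sin_sq_add_cos_sq (α s)

lemma hasDerivAt_mul_inner_tangent (h : IsConvexArc J x y α ρ)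
    (hφ : DifferentiableAt ℝ φ s) (hs : s ∈ J) :
    HasDerivAt (fun t ↦ φ t * (x t * cos (α t) + y t * sin (α t)))
      (deriv φ s * (x s * cos (α s) + y s * sin (α s)) +
        φ s * (-1 + (y s * cos (α s) - x s * sin (α s)) / ρ s)) s := by
  refine (hφ.hasDerivAt.mul (((h.hasDerivAt_fst s hs).mul (h.hasDerivAt_cos_angle hs)).add
    ((h.hasDerivAt_snd s hs).mul (h.hasDerivAt_sin_angle hs)))).congr_deriv ?_
  simp only [Pi.add_apply, Pi.mul_apply]
  linear_combination (-φ s) * sin_sq_add_cos_sq (α s)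

lemma Afun_normalGraph (h : IsConvexArc J x y α ρ) (hρ : ContinuousOn ρ J)
    (hJ : uIcc 0 (2 * L) ⊆ J) (hφ : ContDiff ℝ 2 φ) (hφ0 : φ 0 = 0) (hφL : φ (2 * L) = 0) :
    Afun L (normalGraphFst x y φ) (normalGraphSnd x y φ) =
      Afun L x y + ∫ s in 0..2 * L, (φ s + φ s ^ 2 / (2 * ρ s)) := by
  obtain ⟨hx, hy, hα⟩ := h.continuousOn_curve
  have hne : ∀ s ∈ uIcc 0 (2 * L), ρ s ≠ 0 := fun s hs ↦ (h.radius_pos s (hJ hs)).ne'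
  have hne2 : ∀ s ∈ uIcc 0 (2 * L), 2 * ρ s ≠ 0 := fun s hs ↦ mul_ne_zero two_ne_zero (hne s hs)
  replace hρ := hρ.mono hJ
  replace hx := hx.mono hJ
  replace hy := hy.mono hJ
  replace hα := hα.mono hJ
  have hφc := hφ.continuous
  have hφc' := hφ.continuous_deriv one_le_two
  have hdiff := hφ.differentiable two_ne_zero
  have hboundary : ∫ s in 0..2 * L, (deriv φ s * (x s * cos (α s) + y s * sin (α s)) +
      φ s * (-1 + (y s * cos (α s) - x s * sin (α s)) / ρ s)) = 0 := by
    rw [intervalIntegral.integral_eq_sub_of_hasDerivAt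
      (fun s hs ↦ h.hasDerivAt_mul_inner_tangent (hdiff s) (hJ hs))
      (ContinuousOn.intervalIntegrable (by fun_prop (disch := assumption))), hφ0, hφL]
    ring
  rw [Afun, Afun,
    intervalIntegral.integral_congr fun s hs ↦ h.areaDensity_normalGraph (hdiff s) (hJ hs),
    intervalIntegral.integral_congr fun s hs ↦ h.areaDensity_eq (hJ hs),
    intervalIntegral.integral_add, intervalIntegral.integral_add, hboundary,
    intervalIntegral.integral_const_mul]
  · ring
  all_goals exact ContinuousOn.intervalIntegrable (by fun_prop (disch := assumption))

end IsConvexArc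

namespace IsCriticalRadius

variable {J : Set ℝ} {a b μ : ℝ} {ρ ρ' φ : ℝ → ℝ}

lemma continuousOn (h : IsCriticalRadius J μ ρ ρ') : ContinuousOn ρ J := fun s hs ↦
  (h.hasDerivAt s hs).continuousAt.continuousWithinAt

lemma continuousOn_deriv (h : IsCriticalRadius J μ ρ ρ') : ContinuousOn ρ' J := by
  have hmul : ContinuousOn (fun s ↦ ρ s * ρ' s) J := fun s hs ↦
    (h.hasDerivAt_mul s hs).continuousAt.continuousWithinAt
  refine (hmul.div h.continuousOn fun s hs ↦ (h.pos s hs).ne').congr fun s hs ↦ ?_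
  exact (mul_div_cancel_left₀ _ (h.pos s hs).ne').symm

lemma exists_isRadiusBound (h : IsCriticalRadius J μ ρ ρ') (hJ : Icc a b ⊆ J) :
    ∃ M, ∀ s ∈ Icc a b, IsRadiusBound M ρ ρ' s := by
  have hρ := h.continuousOn.mono hJ
  have hρ' := h.continuousOn_deriv.mono hJ
  have hne : ∀ s ∈ Icc a b, ρ s ≠ 0 := fun s hs ↦ (h.pos s (hJ hs)).ne'
  obtain ⟨C, hC⟩ := isCompact_Icc.exists_bound_of_continuousOn
    (f := fun s ↦ ρ s + (ρ s)⁻¹ + |ρ' s / ρ s|) (by fun_prop (disch := assumption))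
  refine ⟨max 1 C, fun s hs ↦ ?_⟩
  have hsum := (le_abs_self _).trans ((hC s hs).trans (le_max_right 1 C))
  have hpos := h.pos s (hJ hs)
  have hinv := inv_pos.2 hpos
  have habs := abs_nonneg (ρ' s / ρ s)
  exact ⟨le_max_left 1 C, hpos, by linarith, by linarith, by linarith⟩

lemma continuousOn_secondVariation (h : IsCriticalRadius J μ ρ ρ') (hφ : ContDiff ℝ 2 φ) :
    ContinuousOn (secondVariation μ ρ ρ' φ) J := by
  have hρ := h.continuousOn
  have hρ' := h.continuousOn_deriv
  have hne : ∀ s ∈ J, ρ s ≠ 0 := fun s hs ↦ (h.pos s hs).ne'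
  have hφc := hφ.continuous
  have hφc' := hφ.continuous_deriv one_le_two
  unfold secondVariation
  fun_prop (disch := assumption)

lemma continuousOn_graphRelCurvature (h : IsCriticalRadius J μ ρ ρ') (hφ : ContDiff ℝ 2 φ) :
    ContinuousOn (graphRelCurvature ρ ρ' φ) J := by
  have hρ := h.continuousOn
  have hρ' := h.continuousOn_deriv
  have hne : ∀ s ∈ J, ρ s ≠ 0 := fun s hs ↦ (h.pos s hs).ne'
  have hφc := hφ.continuous
  have hφc' := hφ.continuous_deriv one_le_two
  unfold graphRelCurvature relCurvature
  fun_prop (disch := assumption)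

lemma continuousOn_graphInverseCurvature (h : IsCriticalRadius J μ ρ ρ') (hφ : ContDiff ℝ 2 φ) :
    ContinuousOn (graphInverseCurvature ρ ρ' φ) {s ∈ J | graphRelCurvature ρ ρ' φ s ≠ 0} := by
  have hsub : {s ∈ J | graphRelCurvature ρ ρ' φ s ≠ 0} ⊆ J := sep_subset J _
  have hq := (h.continuousOn_graphRelCurvature hφ).mono hsub
  have hq0 : ∀ s ∈ {s ∈ J | graphRelCurvature ρ ρ' φ s ≠ 0}, graphRelCurvature ρ ρ' φ s ≠ 0 :=
    fun s hs ↦ hs.2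
  have hρ := h.continuousOn.mono hsub
  have hne : ∀ s ∈ {s ∈ J | graphRelCurvature ρ ρ' φ s ≠ 0}, ρ s ≠ 0 := fun s hs ↦
    (h.pos s hs.1).ne'
  have hφc := hφ.continuous
  have hφc' := hφ.continuous_deriv one_le_two
  unfold graphInverseCurvature
  fun_prop (disch := assumption)

lemma continuousOn_graphInverseCurvatureTaylor (h : IsCriticalRadius J μ ρ ρ')
    (hφ : ContDiff ℝ 2 φ) : ContinuousOn (graphInverseCurvatureTaylor ρ ρ' φ) J := by
  have hρ := h.continuousOn
  have hρ' := h.continuousOn_deriv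
  have hne : ∀ s ∈ J, ρ s ≠ 0 := fun s hs ↦ (h.pos s hs).ne'
  have hφc := hφ.continuous
  have hφc' := hφ.continuous_deriv one_le_two
  unfold graphInverseCurvatureTaylor inverseCurvatureTaylor
  fun_prop (disch := assumption)

lemma integral_first_variation_eq_zero (h : IsCriticalRadius J μ ρ ρ') (hJ : uIcc a b ⊆ J)
    (hφ : IsClamped_s19 a b φ) : ∫ s in a..b, (ρ s ^ 2 * deriv (deriv φ) s + 2 * μ * φ s) = 0 := by
  have hρ := h.continuousOn.mono hJ
  have hφc := hφ.contDiff.continuous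
  have hφc'' := continuous_deriv_deriv_of_contDiff_two hφ.contDiff
  have hprimitive : ∀ s ∈ uIcc a b, HasDerivAt
      (fun t ↦ deriv φ t * ρ t ^ 2 - 2 * (ρ t * ρ' t) * φ t)
      (ρ s ^ 2 * deriv (deriv φ) s + 2 * μ * φ s) s := fun s hs ↦ by
    refine (((hasDerivAt_deriv_of_contDiff_two hφ.contDiff s).mul
      ((h.hasDerivAt s (hJ hs)).pow 2)).sub (((h.hasDerivAt_mul s (hJ hs)).const_mul 2).mul
        (hasDerivAt_of_contDiff_two hφ.contDiff s))).congr_deriv ?_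
    simp only [Pi.pow_apply]
    ring
  rw [intervalIntegral.integral_eq_sub_of_hasDerivAt hprimitive
    (ContinuousOn.intervalIntegrable (by fun_prop)), hφ.left, hφ.right, hφ.deriv_left,
    hφ.deriv_right]
  ring

lemma integral_graphInverseCurvatureTaylor (h : IsCriticalRadius J μ ρ ρ') (hJ : uIcc a b ⊆ J)
    (hφ : IsClamped_s19 a b φ) :
    ∫ s in a..b, graphInverseCurvatureTaylor ρ ρ' φ s =
      (∫ s in a..b, ρ s) + 2 * (1 - μ) * (∫ s in a..b, (φ s + φ s ^ 2 / (2 * ρ s))) +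
        ∫ s in a..b, secondVariation μ ρ ρ' φ s := by
  have hρ := h.continuousOn.mono hJ
  have hne : ∀ s ∈ uIcc a b, ρ s ≠ 0 := fun s hs ↦ (h.pos s (hJ hs)).ne'
  have hne2 : ∀ s ∈ uIcc a b, 2 * ρ s ≠ 0 := fun s hs ↦ mul_ne_zero two_ne_zero (hne s hs)
  have hφc := hφ.contDiff.continuous
  have hφc'' := continuous_deriv_deriv_of_contDiff_two hφ.contDiff
  have hvar := (h.continuousOn_secondVariation hφ.contDiff).mono hJ
  have hexpand : ∀ s ∈ uIcc a b, graphInverseCurvatureTaylor ρ ρ' φ s =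
      ρ s + 2 * (1 - μ) * (φ s + φ s ^ 2 / (2 * ρ s)) + secondVariation μ ρ ρ' φ s +
        (ρ s ^ 2 * deriv (deriv φ) s + 2 * μ * φ s) := fun s hs ↦ by
    have hρs := hne s hs
    simp only [graphInverseCurvatureTaylor, inverseCurvatureTaylor, secondVariation]
    field_simp
    ring
  rw [intervalIntegral.integral_congr hexpand, intervalIntegral.integral_add,
    intervalIntegral.integral_add, intervalIntegral.integral_add,
    h.integral_first_variation_eq_zero hJ hφ, intervalIntegral.integral_const_mul, add_zero]
  all_goals exact ContinuousOn.intervalIntegrable (by fun_prop (disch := assumption))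

end IsCriticalRadius

namespace IsRadiusBound

variable {M ε s : ℝ} {ρ ρ' φ : ℝ → ℝ}

lemma abs_dimensionless_le (h : IsRadiusBound M ρ ρ' s) (φ : ℝ → ℝ) :
    |φ s / ρ s| ≤ M * |φ s| ∧ |deriv φ s| ≤ M * |deriv φ s| ∧
      |ρ s * deriv (deriv φ) s| ≤ M * |deriv (deriv φ) s| ∧
        |-(φ s * ρ' s) / ρ s| ≤ M * |φ s| := by
  refine ⟨?_, le_mul_of_one_le_left (abs_nonneg _) h.one_le, ?_, ?_⟩
  · rw [div_eq_inv_mul, abs_mul, abs_of_pos (inv_pos.2 h.pos)]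
    gcongr
    exact h.inv_le
  · rw [abs_mul, abs_of_pos h.pos]
    gcongr
    exact h.radius_le
  · rw [neg_div, abs_neg, mul_div_assoc, abs_mul, mul_comm]
    gcongr
    exact h.abs_logDeriv_le

lemma abs_dimensionless_le_of_le (h : IsRadiusBound M ρ ρ' s)
    (hφ : |φ s| + |deriv φ s| + |deriv (deriv φ) s| ≤ ε) :
    |φ s / ρ s| ≤ M * ε ∧ |deriv φ s| ≤ M * ε ∧ |ρ s * deriv (deriv φ) s| ≤ M * ε ∧
      |-(φ s * ρ' s) / ρ s| ≤ M * ε := by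
  obtain ⟨ha, hb, hv, he⟩ := h.abs_dimensionless_le φ
  have hφ0 := abs_nonneg (φ s)
  have hφ1 := abs_nonneg (deriv φ s)
  have hφ2 := abs_nonneg (deriv (deriv φ) s)
  have hle {t : ℝ} (ht : t ≤ ε) : M * t ≤ M * ε :=
    mul_le_mul_of_nonneg_left ht (zero_le_one.trans h.one_le)
  exact ⟨ha.trans (hle (by linarith)), hb.trans (hle (by linarith)), hv.trans (hle (by linarith)),
    he.trans (hle (by linarith))⟩

lemma sum_sq_dimensionless_le (h : IsRadiusBound M ρ ρ' s) (φ : ℝ → ℝ) :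
    (φ s / ρ s) ^ 2 + deriv φ s ^ 2 + (ρ s * deriv (deriv φ) s) ^ 2 +
      (-(φ s * ρ' s) / ρ s) ^ 2 ≤ 2 * M ^ 2 * sobolevDensity φ s := by
  obtain ⟨ha, hb, hv, he⟩ := h.abs_dimensionless_le φ
  have hsq {u w : ℝ} (huw : |u| ≤ M * |w|) : u ^ 2 ≤ M ^ 2 * w ^ 2 := by
    rw [← sq_abs u, ← sq_abs w, ← mul_pow]
    gcongr
  unfold sobolevDensity
  linarith [hsq ha, hsq hb, hsq hv, hsq he, sq_nonneg (M * deriv φ s),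
    sq_nonneg (M * deriv (deriv φ) s)]

lemma graphRelCurvature_pos (h : IsRadiusBound M ρ ρ' s) (hMε : M * ε ≤ 1 / 20)
    (hφ : |φ s| + |deriv φ s| + |deriv (deriv φ) s| ≤ ε) : 0 < graphRelCurvature ρ ρ' φ s := by
  obtain ⟨ha, hb, hv, he⟩ := h.abs_dimensionless_le_of_le hφ
  exact one_half_pos.trans_le (half_le_relCurvature hMε ha hb hv he)

lemma graphInverseCurvatureTaylor_le (h : IsRadiusBound M ρ ρ' s) (hMε : M * ε ≤ 1 / 20)
    (hφ : |φ s| + |deriv φ s| + |deriv (deriv φ) s| ≤ ε) :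
    graphInverseCurvatureTaylor ρ ρ' φ s - 60 * M ^ 4 * ε * sobolevDensity φ s ≤
      graphInverseCurvature ρ ρ' φ s := by
  obtain ⟨ha, hb, hv, he⟩ := h.abs_dimensionless_le_of_le hφ
  have hM : 0 ≤ M := zero_le_one.trans h.one_le
  have hMε0 : 0 ≤ M * ε := (abs_nonneg _).trans hb
  have herror : ρ s * (30 * (M * ε) * ((φ s / ρ s) ^ 2 + deriv φ s ^ 2 +
      (ρ s * deriv (deriv φ) s) ^ 2 + (-(φ s * ρ' s) / ρ s) ^ 2)) ≤
      M * (30 * (M * ε) * (2 * M ^ 2 * sobolevDensity φ s)) := by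
    gcongr
    · exact h.radius_le
    · exact h.sum_sq_dimensionless_le φ
  unfold graphInverseCurvatureTaylor graphInverseCurvature graphRelCurvature
  linarith [mul_le_mul_of_nonneg_left (inverseCurvatureTaylor_le_div hMε ha hb hv he) h.pos.le]

end IsRadiusBound

namespace IsCriticalRadius

variable {J : Set ℝ} {a b μ : ℝ} {ρ ρ' : ℝ → ℝ}

theorem exists_forall_lt_integral_graphInverseCurvature (h : IsCriticalRadius J μ ρ ρ')
    (hab : a < b) (hJ : Icc a b ⊆ J) {k : ℝ} (hk : 0 < k)
    (hcoercive : ∀ φ, IsClamped_s19 a b φ →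
      k * ∫ s in a..b, sobolevDensity φ s ≤ ∫ s in a..b, secondVariation μ ρ ρ' φ s) :
    ∃ ε > 0, ∀ φ, IsClamped_s19 a b φ → (∃ s ∈ Icc a b, φ s ≠ 0) →
      (∀ s ∈ Icc a b, |φ s| + |deriv φ s| + |deriv (deriv φ) s| ≤ ε) →
      (∀ s ∈ Icc a b, 0 < graphRelCurvature ρ ρ' φ s) ∧
      (∫ s in a..b, ρ s) + 2 * (1 - μ) * (∫ s in a..b, (φ s + φ s ^ 2 / (2 * ρ s))) <
        ∫ s in a..b, graphInverseCurvature ρ ρ' φ s := by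
  obtain ⟨M, hbound⟩ := h.exists_isRadiusBound hJ
  have hM0 : 0 < M := zero_lt_one.trans_le (hbound a (left_mem_Icc.2 hab.le)).one_le
  obtain ⟨ε, hε, hMε, hkε⟩ : ∃ ε > 0, M * ε ≤ 1 / 20 ∧ 60 * M ^ 4 * ε < k := by
    refine ⟨min (1 / (20 * M)) (k / (120 * M ^ 4)), by positivity, ?_, ?_⟩
    · linarith [(le_div_iff₀ (by positivity)).1
        (min_le_left (1 / (20 * M)) (k / (120 * M ^ 4)))]
    · linarith [(le_div_iff₀ (by positivity)).1
        (min_le_right (1 / (20 * M)) (k / (120 * M ^ 4)))]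
  refine ⟨ε, hε, fun φ hφ hne hsmall ↦ ?_⟩
  have hpos := fun s hs ↦ (hbound s hs).graphRelCurvature_pos hMε (hsmall s hs)
  refine ⟨hpos, ?_⟩
  have hintF : IntervalIntegrable (graphInverseCurvature ρ ρ' φ) volume a b :=
    ((h.continuousOn_graphInverseCurvature hφ.contDiff).mono fun s hs ↦
      ⟨hJ hs, (hpos s hs).ne'⟩).intervalIntegrable_of_Icc hab.le
  have hintTaylor : IntervalIntegrable (graphInverseCurvatureTaylor ρ ρ' φ) volume a b :=
    ((h.continuousOn_graphInverseCurvatureTaylor hφ.contDiff).mono hJ).intervalIntegrable_of_Icc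
      hab.le
  have hintError : IntervalIntegrable (fun s ↦ 60 * M ^ 4 * ε * sobolevDensity φ s) volume a b :=
    ((continuous_sobolevDensity hφ.contDiff).intervalIntegrable a b).const_mul _
  have hremainder := intervalIntegral.integral_mono_on hab.le (hintTaylor.sub hintError) hintF
    fun s hs ↦ (hbound s hs).graphInverseCurvatureTaylor_le hMε (hsmall s hs)
  rw [intervalIntegral.integral_sub hintTaylor hintError, intervalIntegral.integral_const_mul,
    h.integral_graphInverseCurvatureTaylor (by rwa [uIcc_of_le hab.le]) hφ] at hremainder
  linarith [hcoercive φ hφ,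
    mul_lt_mul_of_pos_right hkε (integral_sobolevDensity_pos hab hφ.contDiff hne)]

end IsCriticalRadius

theorem IsConvexArc.exists_forall_normalGraph_lt {J : Set ℝ} {L μ k : ℝ} {x y α ρ ρ' : ℝ → ℝ}
    (harc : IsConvexArc J x y α ρ) (hρ : IsCriticalRadius J μ ρ ρ') (hL : 0 < L)
    (hJ : Icc 0 (2 * L) ⊆ J) (hk : 0 < k)
    (hcoercive : ∀ φ, IsClamped_s19 0 (2 * L) φ →
      k * ∫ s in 0..2 * L, sobolevDensity φ s ≤ ∫ s in 0..2 * L, secondVariation μ ρ ρ' φ s) :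
    ∃ ε > 0, ∀ φ, IsClamped_s19 0 (2 * L) φ → (∃ s ∈ Icc 0 (2 * L), φ s ≠ 0) →
      (∀ s ∈ Icc 0 (2 * L), |φ s| + |deriv φ s| + |deriv (deriv φ) s| ≤ ε) →
      (∀ s ∈ Icc 0 (2 * L),
        0 < deriv (normalGraphFst x y φ) s * deriv (deriv (normalGraphSnd x y φ)) s -
          deriv (normalGraphSnd x y φ) s * deriv (deriv (normalGraphFst x y φ)) s) ∧
      Ffun L x y - 2 * (1 - μ) * Afun L x y <
        Ffun L (normalGraphFst x y φ) (normalGraphSnd x y φ) -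
          2 * (1 - μ) * Afun L (normalGraphFst x y φ) (normalGraphSnd x y φ) := by
  have hL0 : 0 < 2 * L := by positivity
  have hJ' : uIcc 0 (2 * L) ⊆ J := by rwa [uIcc_of_le hL0.le]
  obtain ⟨ε, hε, hmin⟩ :=
    hρ.exists_forall_lt_integral_graphInverseCurvature hL0 hJ hk hcoercive
  refine ⟨ε, hε, fun φ hφ hne hsmall ↦ ?_⟩
  obtain ⟨hpos, hlt⟩ := hmin φ hφ hne hsmall
  refine ⟨fun s hs ↦ ?_, ?_⟩
  · rw [harc.det_normalGraph (hρ.hasDerivAt s (hJ hs)) hφ.contDiff (hJ hs)]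
    exact div_pos (hpos s hs) (hρ.pos s (hJ hs))
  · rw [harc.Ffun_normalGraph hρ.hasDerivAt hJ' hφ.contDiff,
      harc.Ffun_eq_integral_radius hρ.hasDerivAt hJ',
      harc.Afun_normalGraph hρ.continuousOn hJ' hφ.contDiff hφ.left hφ.right]
    linarith

/-! ### Coercivity of the second variation -/

/-- First derivative of `φ` with respect to the tangent angle, `ds = ρ dα`. -/
noncomputable def angleDeriv (ρ φ : ℝ → ℝ) (s : ℝ) : ℝ := ρ s * deriv φ s

/-- Second derivative of `φ` with respect to the tangent angle. -/
noncomputable def angleDerivTwo (ρ ρ' φ : ℝ → ℝ) (s : ℝ) : ℝ :=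
  ρ s * (ρ' s * deriv φ s + ρ s * deriv (deriv φ) s)

/-- `S : [p, q] → [a, b]` is arc length as a function of the tangent angle. -/
structure IsAngleParametrization (p q a b : ℝ) (ρ S : ℝ → ℝ) : Prop where
  hasDerivAt : ∀ t ∈ Icc p q, HasDerivAt S (ρ (S t)) t
  mapsTo : MapsTo S (Icc p q) (Icc a b)
  left : S p = a
  right : S q = b

namespace IsAngleParametrization

variable {a b p q : ℝ} {S ρ G : ℝ → ℝ}

lemma continuousOn (h : IsAngleParametrization p q a b ρ S) : ContinuousOn S (Icc p q) :=
  fun t ht ↦ (h.hasDerivAt t ht).continuousAt.continuousWithinAt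

lemma integral_comp (h : IsAngleParametrization p q a b ρ S) (hpq : p ≤ q)
    (hρ : ContinuousOn ρ (Icc a b)) (hρ0 : ∀ s ∈ Icc a b, ρ s ≠ 0)
    (hG : ContinuousOn G (Icc a b)) : ∫ t in p..q, G (S t) = ∫ s in a..b, G s / ρ s := by
  have hIcc := uIcc_of_le hpq
  have hchange := intervalIntegral.integral_comp_mul_deriv' (f := S) (f' := fun t ↦ ρ (S t))
    (g := fun s ↦ G s / ρ s) (hIcc ▸ h.hasDerivAt)
    (hIcc ▸ hρ.comp h.continuousOn h.mapsTo)
    (hIcc ▸ (hG.div hρ hρ0).mono h.mapsTo.image_subset)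
  rw [h.left, h.right] at hchange
  rw [← hchange]
  exact intervalIntegral.integral_congr fun t ht ↦
    (div_mul_cancel₀ _ (hρ0 (S t) (h.mapsTo (hIcc ▸ ht)))).symm

end IsAngleParametrization

namespace IsRadiusBound

variable {M s : ℝ} {ρ ρ' : ℝ → ℝ}

lemma inv_sq_le (h : IsRadiusBound M ρ ρ' s) : (ρ s)⁻¹ ^ 2 ≤ M ^ 2 :=
  pow_le_pow_left₀ (inv_pos.2 h.pos).le h.inv_le 2

lemma deriv_sq_le (h : IsRadiusBound M ρ ρ' s) (φ : ℝ → ℝ) :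
    deriv φ s ^ 2 ≤ M ^ 2 * angleDeriv ρ φ s ^ 2 := by
  have hderiv : deriv φ s = (ρ s)⁻¹ * angleDeriv ρ φ s := (inv_mul_cancel_left₀ h.pos.ne' _).symm
  rw [hderiv, mul_pow]
  exact mul_le_mul_of_nonneg_right h.inv_sq_le (sq_nonneg _)

lemma deriv_deriv_sq_le (h : IsRadiusBound M ρ ρ' s) (φ : ℝ → ℝ) :
    deriv (deriv φ) s ^ 2 ≤
      2 * M ^ 4 * (angleDeriv ρ φ s ^ 2 + angleDerivTwo ρ ρ' φ s ^ 2) := by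
  set f₁ := angleDeriv ρ φ s with hf₁
  set f₂ := angleDerivTwo ρ ρ' φ s with hf₂
  have hinv := h.inv_sq_le
  have hlog : (ρ' s / ρ s) ^ 2 ≤ M ^ 2 := sq_le_sq' (abs_le.1 h.abs_logDeriv_le).1
    (abs_le.1 h.abs_logDeriv_le).2
  have hderiv : deriv (deriv φ) s = (ρ s)⁻¹ * ((ρ s)⁻¹ * f₂ - ρ' s / ρ s * f₁) := by
    have hρ := h.pos.ne'
    rw [hf₁, hf₂, angleDeriv, angleDerivTwo]
    field_simp
    ring
  calc deriv (deriv φ) s ^ 2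
      = (ρ s)⁻¹ ^ 2 * ((ρ s)⁻¹ * f₂ - ρ' s / ρ s * f₁) ^ 2 := by rw [hderiv, mul_pow]
    _ ≤ (ρ s)⁻¹ ^ 2 * (2 * ((ρ s)⁻¹ ^ 2 * f₂ ^ 2 + (ρ' s / ρ s) ^ 2 * f₁ ^ 2)) := by
        gcongr
        linarith [sq_nonneg ((ρ s)⁻¹ * f₂ + ρ' s / ρ s * f₁)]
    _ ≤ M ^ 2 * (2 * (M ^ 2 * f₂ ^ 2 + M ^ 2 * f₁ ^ 2)) := by
        gcongr
    _ = _ := by ring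

lemma sobolevDensity_le (h : IsRadiusBound M ρ ρ' s) (φ : ℝ → ℝ) :
    sobolevDensity φ s ≤
      3 * M ^ 5 * ((φ s ^ 2 + angleDeriv ρ φ s ^ 2 + angleDerivTwo ρ ρ' φ s ^ 2) / ρ s) := by
  have hM := h.one_le
  have hM4 : M ^ 2 ≤ M ^ 4 := pow_le_pow_right₀ hM (by norm_num)
  set f₁ := angleDeriv ρ φ s
  set f₂ := angleDerivTwo ρ ρ' φ s
  calc sobolevDensity φ s
      ≤ 3 * M ^ 4 * (φ s ^ 2 + f₁ ^ 2 + f₂ ^ 2) := by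
        unfold sobolevDensity
        linarith [h.deriv_sq_le φ, h.deriv_deriv_sq_le φ,
          mul_le_mul_of_nonneg_right (one_le_pow₀ hM (n := 4)) (sq_nonneg (φ s)),
          mul_le_mul_of_nonneg_right hM4 (sq_nonneg f₁), sq_nonneg (M ^ 2 * φ s),
          sq_nonneg (M ^ 2 * f₂)]
    _ ≤ 3 * M ^ 4 * (M * ((φ s ^ 2 + f₁ ^ 2 + f₂ ^ 2) / ρ s)) := by
        gcongr
        rw [← mul_div_assoc, le_div_iff₀ h.pos, mul_comm]
        gcongr
        exact h.radius_le
    _ = _ := by ring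

end IsRadiusBound

namespace IsCriticalRadius

variable {J : Set ℝ} {a b p q μ : ℝ} {S ρ ρ' φ : ℝ → ℝ}

lemma hasDerivAt_angleDeriv (h : IsCriticalRadius J μ ρ ρ') (hφ : ContDiff ℝ 2 φ) {s : ℝ}
    (hs : s ∈ J) :
    HasDerivAt (angleDeriv ρ φ) (ρ' s * deriv φ s + ρ s * deriv (deriv φ) s) s :=
  (h.hasDerivAt s hs).mul (hasDerivAt_deriv_of_contDiff_two hφ s)

lemma continuousOn_angleDeriv (h : IsCriticalRadius J μ ρ ρ') (hφ : ContDiff ℝ 2 φ) :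
    ContinuousOn (angleDeriv ρ φ) J :=
  h.continuousOn.mul (hφ.continuous_deriv one_le_two).continuousOn

lemma continuousOn_angleDerivTwo (h : IsCriticalRadius J μ ρ ρ') (hφ : ContDiff ℝ 2 φ) :
    ContinuousOn (angleDerivTwo ρ ρ' φ) J :=
  h.continuousOn.mul ((h.continuousOn_deriv.mul (hφ.continuous_deriv one_le_two).continuousOn).add
    (h.continuousOn.mul (continuous_deriv_deriv_of_contDiff_two hφ).continuousOn))

lemma integral_secondVariation (h : IsCriticalRadius J μ ρ ρ') (hJ : uIcc a b ⊆ J)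
    (hφ : IsClamped_s19 a b φ) :
    ∫ s in a..b, secondVariation μ ρ ρ' φ s =
      ∫ s in a..b, (angleDerivTwo ρ ρ' φ s ^ 2 - (1 + μ) * angleDeriv ρ φ s ^ 2 +
        μ * φ s ^ 2) / ρ s := by
  have hf₂ := (h.continuousOn_angleDerivTwo hφ.contDiff).mono hJ
  have hf₁ := (h.continuousOn_angleDeriv hφ.contDiff).mono hJ
  have hφc := hφ.contDiff.continuous
  have hρ := h.continuousOn.mono hJ
  have hne : ∀ s ∈ uIcc a b, ρ s ≠ 0 := fun s hs ↦ (h.pos s (hJ hs)).ne'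
  have hvar : IntervalIntegrable (secondVariation μ ρ ρ' φ) volume a b :=
    ((h.continuousOn_secondVariation hφ.contDiff).mono hJ).intervalIntegrable
  have hform : IntervalIntegrable (fun s ↦ (angleDerivTwo ρ ρ' φ s ^ 2 -
      (1 + μ) * angleDeriv ρ φ s ^ 2 + μ * φ s ^ 2) / ρ s) volume a b :=
    ContinuousOn.intervalIntegrable (by fun_prop (disch := assumption))
  have hprimitive : ∀ s ∈ uIcc a b, HasDerivAt
      (fun t ↦ φ t * angleDeriv ρ φ t - ρ t * ρ' t * (deriv φ t * angleDeriv ρ φ t))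
      (secondVariation μ ρ ρ' φ s - (angleDerivTwo ρ ρ' φ s ^ 2 -
        (1 + μ) * angleDeriv ρ φ s ^ 2 + μ * φ s ^ 2) / ρ s) s := fun s hs ↦ by
    have hangle := h.hasDerivAt_angleDeriv hφ.contDiff (hJ hs)
    refine (((hasDerivAt_of_contDiff_two hφ.contDiff s).mul hangle).sub
      ((h.hasDerivAt_mul s (hJ hs)).mul ((hasDerivAt_deriv_of_contDiff_two hφ.contDiff s).mul
        hangle))).congr_deriv ?_
    have hρs := hne s hs
    simp only [secondVariation, angleDeriv, angleDerivTwo, Pi.mul_apply]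
    field_simp
    ring
  rw [← sub_eq_zero, ← intervalIntegral.integral_sub hvar hform,
    intervalIntegral.integral_eq_sub_of_hasDerivAt hprimitive (hvar.sub hform), hφ.left, hφ.right,
    hφ.deriv_left, hφ.deriv_right]
  ring

lemma integral_angleDeriv_sq_le_integral_secondVariation (h : IsCriticalRadius J μ ρ ρ')
    (hμ0 : 0 ≤ μ) (hμ1 : μ ≤ 1) (hpq : p < q) (hlen : q - p ≤ 2 * π) (hab : a ≤ b)
    (hJ : Icc a b ⊆ J) (hS : IsAngleParametrization p q a b ρ S) (hφ : IsClamped_s19 a b φ) :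
    μ / (12 * exp (q - p) + 2) * ∫ s in a..b,
        (φ s ^ 2 + angleDeriv ρ φ s ^ 2 + angleDerivTwo ρ ρ' φ s ^ 2) / ρ s ≤
      ∫ s in a..b, secondVariation μ ρ ρ' φ s := by
  have hφc := hφ.contDiff.continuous
  have hf₁ := (h.continuousOn_angleDeriv hφ.contDiff).mono hJ
  have hf₂ := (h.continuousOn_angleDerivTwo hφ.contDiff).mono hJ
  have hchange {G : ℝ → ℝ} (hG : ContinuousOn G (Icc a b)) :=
    hS.integral_comp hpq.le (h.continuousOn.mono hJ) (fun s hs ↦ (h.pos s (hJ hs)).ne')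
      hG
  rw [h.integral_secondVariation (by rwa [uIcc_of_le hab]) hφ, ← hchange (by fun_prop),
    ← hchange (by fun_prop)]
  refine integral_quadratic_form_coercive (f := fun t ↦ φ (S t))
    (f' := fun t ↦ angleDeriv ρ φ (S t)) (f'' := fun t ↦ angleDerivTwo ρ ρ' φ (S t))
    hpq hlen hμ0 hμ1 (fun t ht ↦ ?_) (fun t ht ↦ ?_) ?_ ?_ ?_ ?_ ?_
  · exact ((hasDerivAt_of_contDiff_two hφ.contDiff (S t)).comp t (hS.hasDerivAt t ht)).congr_deriv
      (mul_comm _ _)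
  · exact ((h.hasDerivAt_angleDeriv hφ.contDiff (hJ (hS.mapsTo ht))).comp t
      (hS.hasDerivAt t ht)).congr_deriv (mul_comm _ _)
  · exact hf₂.comp hS.continuousOn hS.mapsTo
  · rw [hS.left, hφ.left]
  · rw [hS.right, hφ.right]
  · rw [angleDeriv, hS.left, hφ.deriv_left, mul_zero]
  · rw [angleDeriv, hS.right, hφ.deriv_right, mul_zero]

theorem exists_secondVariation_coercive (h : IsCriticalRadius J μ ρ ρ') (hμ0 : 0 < μ)
    (hμ1 : μ ≤ 1) (hpq : p < q) (hlen : q - p ≤ 2 * π) (hab : a ≤ b) (hJ : Icc a b ⊆ J)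
    (hS : IsAngleParametrization p q a b ρ S) :
    ∃ k > 0, ∀ φ, IsClamped_s19 a b φ →
      k * ∫ s in a..b, sobolevDensity φ s ≤ ∫ s in a..b, secondVariation μ ρ ρ' φ s := by
  obtain ⟨M, hbound⟩ := h.exists_isRadiusBound hJ
  have hM0 : 0 < M := zero_lt_one.trans_le (hbound a (left_mem_Icc.2 hab)).one_le
  refine ⟨μ / (12 * exp (q - p) + 2) / (3 * M ^ 5), by positivity, fun φ hφ ↦ ?_⟩
  have hρ := h.continuousOn.mono hJ
  have hne : ∀ s ∈ Icc a b, ρ s ≠ 0 := fun s hs ↦ (h.pos s (hJ hs)).ne'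
  have hφc := hφ.contDiff.continuous
  have hf₁ := (h.continuousOn_angleDeriv hφ.contDiff).mono hJ
  have hf₂ := (h.continuousOn_angleDerivTwo hφ.contDiff).mono hJ
  have hnorm : ∫ s in a..b, sobolevDensity φ s ≤ 3 * M ^ 5 * ∫ s in a..b,
      (φ s ^ 2 + angleDeriv ρ φ s ^ 2 + angleDerivTwo ρ ρ' φ s ^ 2) / ρ s := by
    rw [← intervalIntegral.integral_const_mul]
    exact intervalIntegral.integral_mono_on hab
      ((continuous_sobolevDensity hφ.contDiff).intervalIntegrable a b)
      (ContinuousOn.intervalIntegrable_of_Icc hab (by fun_prop (disch := assumption)))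
      fun s hs ↦ (hbound s hs).sobolevDensity_le φ
  calc μ / (12 * exp (q - p) + 2) / (3 * M ^ 5) * ∫ s in a..b, sobolevDensity φ s
      ≤ μ / (12 * exp (q - p) + 2) / (3 * M ^ 5) * (3 * M ^ 5 * ∫ s in a..b,
          (φ s ^ 2 + angleDeriv ρ φ s ^ 2 + angleDerivTwo ρ ρ' φ s ^ 2) / ρ s) := by gcongr
    _ = μ / (12 * exp (q - p) + 2) * ∫ s in a..b,
          (φ s ^ 2 + angleDeriv ρ φ s ^ 2 + angleDerivTwo ρ ρ' φ s ^ 2) / ρ s := by field_simp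
    _ ≤ _ := h.integral_angleDeriv_sq_le_integral_secondVariation hμ0.le hμ1 hpq hlen hab hJ hS hφ

end IsCriticalRadius

/-! ### The critical curve -/

/-- Radius of curvature `1 / H` of the critical curve, where `m = σ / π`. -/
noncomputable def criticalRadius (m κ L s : ℝ) : ℝ := m * √(κ ^ 2 - (s - L) ^ 2)

/-- Derivative of `criticalRadius`, solved from `ρ² = m² (κ² - (s - L)²)`. -/
noncomputable def criticalRadiusDeriv (m κ L s : ℝ) : ℝ :=
  -(m ^ 2 * (s - L)) / criticalRadius m κ L s

section CriticalRadius

variable {m κ L s : ℝ}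

lemma sq_sub_sq_pos_of_mem_Ioo (hs : s ∈ Ioo (L - κ) (L + κ)) : 0 < κ ^ 2 - (s - L) ^ 2 :=
  sub_pos.2 (sq_lt_sq' (by linarith [hs.1]) (by linarith [hs.2]))

lemma criticalRadius_pos (hm : 0 < m) (hs : s ∈ Ioo (L - κ) (L + κ)) :
    0 < criticalRadius m κ L s :=
  mul_pos hm (sqrt_pos.2 (sq_sub_sq_pos_of_mem_Ioo hs))

lemma criticalRadius_add_mul_sin (hκ : 0 ≤ κ) {t : ℝ} (ht : 0 ≤ cos t) :
    criticalRadius m κ L (L + κ * sin t) = κ * (cos t * m) := by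
  have hsq : κ ^ 2 - (L + κ * sin t - L) ^ 2 = (κ * cos t) ^ 2 := by
    linear_combination -κ ^ 2 * sin_sq_add_cos_sq t
  rw [criticalRadius, hsq, sqrt_sq (by positivity)]
  ring

theorem isCriticalRadius_criticalRadius (hm : 0 < m) :
    IsCriticalRadius (Ioo (L - κ) (L + κ)) (m ^ 2) (criticalRadius m κ L)
      (criticalRadiusDeriv m κ L) where
  pos s hs := criticalRadius_pos hm hs
  hasDerivAt s hs := by
    have hsqrt := sqrt_pos.2 (sq_sub_sq_pos_of_mem_Ioo hs)
    refine ((((((hasDerivAt_id s).sub_const L).pow 2).const_sub (κ ^ 2)).sqrt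
      (sq_sub_sq_pos_of_mem_Ioo hs).ne').const_mul m).congr_deriv ?_
    simp only [criticalRadiusDeriv, criticalRadius, Pi.pow_apply, id]
    field_simp
    ring
  hasDerivAt_mul s hs := by
    have hmul : (fun t ↦ criticalRadius m κ L t * criticalRadiusDeriv m κ L t) =ᶠ[nhds s]
        fun t ↦ -(m ^ 2 * (t - L)) := by
      filter_upwards [isOpen_Ioo.mem_nhds hs] with t ht
      exact mul_div_cancel₀ _ (criticalRadius_pos hm ht).ne'
    exact ((((hasDerivAt_id s).sub_const L).const_mul (m ^ 2)).neg.congr_deriv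
      (by ring)).congr_of_eventuallyEq hmul

lemma isAngleParametrization_criticalRadius (hm : 0 ≤ m) (hκ : 0 ≤ κ) {T : ℝ}
    (hT : m * T ≤ π / 2) :
    IsAngleParametrization (-T) T (L - κ * sin (m * T)) (L + κ * sin (m * T))
      (criticalRadius m κ L) (fun t ↦ L + κ * sin (m * t)) := by
  have hbounds : ∀ t ∈ Icc (-T) T, -(m * T) ≤ m * t ∧ m * t ≤ m * T := fun t ht ↦
    ⟨by linarith [mul_le_mul_of_nonneg_left ht.1 hm], mul_le_mul_of_nonneg_left ht.2 hm⟩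
  refine ⟨fun t ht ↦ ?_, fun t ht ↦ ?_, ?_, rfl⟩
  · obtain ⟨hlo, hhi⟩ := hbounds t ht
    rw [criticalRadius_add_mul_sin hκ
      (cos_nonneg_of_neg_pi_div_two_le_of_le (by linarith) (by linarith))]
    exact ((((hasDerivAt_id t).const_mul m).sin.const_mul κ).const_add L).congr_deriv (by simp)
  · obtain ⟨hlo, hhi⟩ := hbounds t ht
    have hsin_le : sin (m * t) ≤ sin (m * T) := sin_le_sin_of_le_of_le_pi_div_two
      (by linarith) hT hhi
    have hneg_le : -sin (m * T) ≤ sin (m * t) := by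
      rw [← sin_neg]
      exact sin_le_sin_of_le_of_le_pi_div_two (by linarith) (by linarith) hlo
    exact ⟨by linarith [mul_le_mul_of_nonneg_left hneg_le hκ],
      by linarith [mul_le_mul_of_nonneg_left hsin_le hκ]⟩
  · simp only [mul_neg, sin_neg]
    ring

lemma hasDerivAt_arcsin_div (hs : s ∈ Ioo (L - κ) (L + κ)) :
    HasDerivAt (fun t ↦ arcsin ((t - L) / κ)) (1 / (κ * cos (arcsin ((s - L) / κ)))) s := by
  have hκ : 0 < κ := by linarith [hs.1, hs.2]
  have hlo : -1 < (s - L) / κ := (lt_div_iff₀ hκ).2 (by linarith [hs.1])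
  have hhi : (s - L) / κ < 1 := (div_lt_one hκ).2 (by linarith [hs.2])
  refine ((hasDerivAt_arcsin hlo.ne' hhi.ne).comp s
    (((hasDerivAt_id s).sub_const L).div_const κ)).congr_deriv ?_
  rw [cos_arcsin]
  field_simp

lemma mul_cos_arcsin_div (hκ : 0 < κ) :
    κ * cos (arcsin ((s - L) / κ)) = √(κ ^ 2 - (s - L) ^ 2) := by
  have hsq : κ ^ 2 - (s - L) ^ 2 = κ ^ 2 * (1 - ((s - L) / κ) ^ 2) := by field_simp
  rw [hsq, sqrt_mul (sq_nonneg κ), sqrt_sq hκ.le, cos_arcsin]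

end CriticalRadius

section TangentPrimitive

variable {κ ν s : ℝ} {θ : ℝ → ℝ}

lemma hasDerivAt_sin_add_sin (hθ : HasDerivAt θ (1 / (κ * cos (θ s))) s) (hκ : κ * cos (θ s) ≠ 0)
    (hν : ν + 1 ≠ 0) (hν' : ν - 1 ≠ 0) :
    HasDerivAt (fun t ↦ κ / 2 * (sin ((ν + 1) * θ t) / (ν + 1) + sin ((ν - 1) * θ t) / (ν - 1)))
      (cos (ν * θ s)) s := by
  refine ((((hθ.const_mul (ν + 1)).sin.div_const (ν + 1)).add
    ((hθ.const_mul (ν - 1)).sin.div_const (ν - 1))).const_mul (κ / 2)).congr_deriv ?_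
  obtain ⟨hκ0, hcos⟩ := mul_ne_zero_iff.1 hκ
  rw [add_one_mul, sub_one_mul, cos_add, cos_sub]
  field_simp
  ring

lemma hasDerivAt_cos_add_cos (hθ : HasDerivAt θ (1 / (κ * cos (θ s))) s) (hκ : κ * cos (θ s) ≠ 0)
    (hν : ν + 1 ≠ 0) (hν' : ν - 1 ≠ 0) :
    HasDerivAt (fun t ↦ κ / 2 * (cos ((ν + 1) * θ t) / (ν + 1) + cos ((ν - 1) * θ t) / (ν - 1)))
      (-sin (ν * θ s)) s := by
  refine ((((hθ.const_mul (ν + 1)).cos.div_const (ν + 1)).add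
    ((hθ.const_mul (ν - 1)).cos.div_const (ν - 1))).const_mul (κ / 2)).congr_deriv ?_
  obtain ⟨hκ0, hcos⟩ := mul_ne_zero_iff.1 hκ
  rw [add_one_mul, sub_one_mul, sin_add, sin_sub]
  field_simp
  ring

end TangentPrimitive

section CriticalCurve

variable {x0 L : ℝ}

lemma sig_div_pi_sq (hx0 : 0 < x0) (hL : 0 < L) : (sig x0 L / π) ^ 2 = x0 / (L + x0) := by
  rw [sig, mul_div_cancel_left₀ _ pi_ne_zero, sq_sqrt (by positivity)]

lemma two_mul_one_sub_sig_div_pi_sq (hx0 : 0 < x0) (hL : 0 < L) :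
    2 * (1 - (sig x0 L / π) ^ 2) = 2 * L / (L + x0) := by
  rw [sig_div_pi_sq hx0 hL]
  field_simp
  ring

lemma sig_pos (hx0 : 0 < x0) (hL : 0 < L) : 0 < sig x0 L :=
  mul_pos pi_pos (sqrt_pos.2 (by positivity))

lemma sig_lt_pi_div_two (hx0 : 0 < x0) (hL : 3 * x0 < L) : sig x0 L < π / 2 := by
  have hsqrt : √(x0 / (L + x0)) < 1 / 2 := by
    rw [sqrt_lt' one_half_pos, div_lt_iff₀ (by linarith)]
    linarith
  rw [sig]
  linarith [mul_lt_mul_of_pos_left hsqrt pi_pos]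

lemma kap_mul_sin_sig (hσ0 : 0 < sig x0 L) (hσ : sig x0 L < π) :
    kap x0 L * sin (sig x0 L) = L :=
  div_mul_cancel₀ L (sin_pos_of_pos_of_lt_pi hσ0 hσ).ne'

lemma lt_kap_s19 (hL : 0 < L) (hσ0 : 0 < sig x0 L) (hσ : sig x0 L < π / 2) : L < kap x0 L := by
  have hsin := sin_pos_of_pos_of_lt_pi hσ0 (by linarith [pi_pos])
  have hsin1 : sin (sig x0 L) < 1 := by
    simpa using sin_lt_sin_of_lt_of_le_pi_div_two (by linarith) le_rfl hσ
  exact (lt_div_iff₀ hsin).2 (mul_lt_of_lt_one_right hL hsin1)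

lemma Icc_subset_Ioo_kap (hL : L < kap x0 L) :
    Icc 0 (2 * L) ⊆ Ioo (L - kap x0 L) (L + kap x0 L) :=
  Icc_subset_Ioo (by linarith) (by linarith)

lemma isAngleParametrization_critical (hL : 0 < L) (hσ0 : 0 < sig x0 L) (hσ : sig x0 L < π / 2) :
    IsAngleParametrization (-π) π 0 (2 * L) (criticalRadius (sig x0 L / π) (kap x0 L) L)
      (fun t ↦ L + kap x0 L * sin (sig x0 L / π * t)) := by
  have hmπ : sig x0 L / π * π = sig x0 L := div_mul_cancel₀ _ pi_ne_zero
  have hangle := isAngleParametrization_criticalRadius (L := L) (div_pos hσ0 pi_pos).le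
    (hL.trans (lt_kap_s19 hL hσ0 hσ)).le (hmπ.le.trans hσ.le)
  rwa [hmπ, kap_mul_sin_sig hσ0 (by linarith), sub_self, ← two_mul] at hangle

theorem isConvexArc_critical (hσ0 : 0 < sig x0 L) (hσ : sig x0 L < π) :
    IsConvexArc (Ioo (L - kap x0 L) (L + kap x0 L)) (xc x0 L) (yc x0 L)
      (fun s ↦ π / sig x0 L * arcsin ((s - L) / kap x0 L))
      (criticalRadius (sig x0 L / π) (kap x0 L) L) := by
  set σ := sig x0 L with hσdef
  set κ := kap x0 L with hκdef
  have hν : π / σ + 1 ≠ 0 := by positivity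
  have hν' : π / σ - 1 ≠ 0 := (sub_pos.2 ((one_lt_div hσ0).2 hσ)).ne'
  have hadd : (π + σ) / σ = π / σ + 1 := by field_simp
  have hsub : (π - σ) / σ = π / σ - 1 := by field_simp
  have hadd_inv : σ / (π + σ) = (π / σ + 1)⁻¹ := by rw [← hadd, inv_div]
  have hsub_inv : σ / (π - σ) = (π / σ - 1)⁻¹ := by rw [← hsub, inv_div]
  have hκpos {s : ℝ} (hs : s ∈ Ioo (L - κ) (L + κ)) : 0 < κ := by linarith [hs.1, hs.2]
  have hκcos {s : ℝ} (hs : s ∈ Ioo (L - κ) (L + κ)) : κ * cos (arcsin ((s - L) / κ)) ≠ 0 := by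
    rw [mul_cos_arcsin_div (hκpos hs)]
    exact (sqrt_pos.2 (sq_sub_sq_pos_of_mem_Ioo hs)).ne'
  refine ⟨isOpen_Ioo, fun s hs ↦ criticalRadius_pos (by positivity) hs, fun s hs ↦ ?_,
    fun s hs ↦ ?_, fun s hs ↦ ?_⟩
  · refine (hasDerivAt_sin_add_sin (hasDerivAt_arcsin_div hs) (hκcos hs) hν
      hν').neg.congr_of_eventuallyEq (.of_forall fun t ↦ ?_)
    simp only [xc, ← hσdef, ← hκdef, hadd, hsub, hadd_inv, hsub_inv, Pi.neg_apply]
    ring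
  · refine ((hasDerivAt_cos_add_cos (hasDerivAt_arcsin_div hs) (hκcos hs) hν hν').add_const
      (π * x0 / (σ * tan σ))).congr_of_eventuallyEq (.of_forall fun t ↦ ?_)
    simp only [yc, ← hσdef, ← hκdef, hadd, hsub, hadd_inv, hsub_inv]
    ring
  · refine ((hasDerivAt_arcsin_div hs).const_mul (π / σ)).congr_deriv ?_
    rw [mul_cos_arcsin_div (hκpos hs), criticalRadius]
    field_simp

end CriticalCurve

/-- local minimality of the critical curve for `F − λA` among small `C²` normal
graphs, with `λ = 2L/(L+x₀)`. -/
theorem statement19 (x0 L : ℝ) (hx0 : 0 < x0) (hL : 3 * x0 < L) :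
    ∃ ε > (0:ℝ), ∀ φ : ℝ → ℝ, ContDiff ℝ 2 φ →
      (∃ s ∈ Set.Icc (0:ℝ) (2 * L), φ s ≠ 0) →
      φ 0 = 0 → φ (2 * L) = 0 → deriv φ 0 = 0 → deriv φ (2 * L) = 0 →
      (∀ s ∈ Set.Icc (0:ℝ) (2 * L),
          |φ s| + |deriv φ s| + |deriv (deriv φ) s| ≤ ε) →
      (∀ s ∈ Set.Icc (0:ℝ) (2 * L),
          0 < deriv (pc1 x0 L φ) s * deriv (deriv (pc2 x0 L φ)) s -
              deriv (pc2 x0 L φ) s * deriv (deriv (pc1 x0 L φ)) s) ∧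
      Ffun L (xc x0 L) (yc x0 L) - 2 * L / (L + x0) * Afun L (xc x0 L) (yc x0 L) <
        Ffun L (pc1 x0 L φ) (pc2 x0 L φ) -
          2 * L / (L + x0) * Afun L (pc1 x0 L φ) (pc2 x0 L φ) ∧
      (Afun L (pc1 x0 L φ) (pc2 x0 L φ) = Afun L (xc x0 L) (yc x0 L) →
        Ffun L (xc x0 L) (yc x0 L) < Ffun L (pc1 x0 L φ) (pc2 x0 L φ)) := by
  have hL0 : 0 < L := by linarith
  have hσ0 := sig_pos hx0 hL0
  have hσ := sig_lt_pi_div_two hx0 hL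
  have hσπ : sig x0 L < π := by linarith
  have hm0 : 0 < sig x0 L / π := div_pos hσ0 pi_pos
  have hm1 : sig x0 L / π ≤ 1 := (div_le_one pi_pos).2 hσπ.le
  have hJ := Icc_subset_Ioo_kap (lt_kap_s19 hL0 hσ0 hσ)
  have hcritical := isCriticalRadius_criticalRadius (κ := kap x0 L) (L := L) hm0
  obtain ⟨k, hk, hcoercive⟩ := hcritical.exists_secondVariation_coercive (pow_pos hm0 2)
    (pow_le_one₀ hm0.le hm1) (by linarith) (by linarith) (by linarith) hJ
    (isAngleParametrization_critical hL0 hσ0 hσ)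
  obtain ⟨ε, hε, hmin⟩ := (isConvexArc_critical hσ0 hσπ).exists_forall_normalGraph_lt hcritical
    hL0 hJ hk hcoercive
  rw [two_mul_one_sub_sig_div_pi_sq hx0 hL0] at hmin
  refine ⟨ε, hε, fun φ hφ hne hφ0 hφL hφ0' hφL' hsmall ↦ ?_⟩
  obtain ⟨hpos, hlt⟩ := hmin φ ⟨hφ, hφ0, hφL, hφ0', hφL'⟩ hne hsmall
  refine ⟨hpos, hlt, fun hA ↦ ?_⟩
  change _ < Ffun L (pc1 x0 L φ) _ - _ * Afun L (pc1 x0 L φ) (pc2 x0 L φ) at hlt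
  rwa [hA, sub_lt_sub_iff_right] at hlt
end
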